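/- Let δ > 0 and let ψ : ℕ → ℝ_{≥0} be a function satisfying ψ(q) = O(q^{-δ}). For any y ∈ ℝ², if ∑_{q=1}^∞ ψ(q)² = ∞, then the set 𝒜_{1,2}(ψ, y) of (ψ, y)-approximable points in [0,1)² has Lebesgue measure 1. -/

import Mathlib

open MeasureTheory Real Filter

/-- The unit box `[0,1)²`. -/
def unitBox : Set (Fin 2 → ℝ) := Set.univ.pi fun _ => Set.Ico (0 : ℝ) 1

/-- The set `𝒜_{1,2}(ψ,y)` of `(ψ,y)`-approximable points of `[0,1)²`: those `x` for which
there are infinitely many pairs `(q,p) ∈ ℕ × ℤ²` with `|q·x - p - y| < ψ(q)` (maximum norm). -/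
def approxSet (ψ : ℕ → ℝ) (y : Fin 2 → ℝ) : Set (Fin 2 → ℝ) :=
  {x ∈ unitBox | {qp : ℕ × (Fin 2 → ℤ) |
    ‖(qp.1 : ℝ) • x - (fun i => (qp.2 i : ℝ)) - y‖ < ψ qp.1}.Infinite}

/-!
For each `q`, restrict to the numerators `p` whose rational points `(p + c / b) / q` satisfy a
primitivity condition, where `c / b` is a rational vector that approximates `y` at the scale of `q`;
one such vector serves a whole doubly exponential block `2 ^ 2 ^ k ≤ q < 2 ^ 2 ^ (k + 1)`. In every
fixed ball the restricted sets keep a positive proportion of the unrestricted ones once `q` is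
large. Two of them from the same block are disjoint if `q r / gcd(q, r) ^ 2` is small: a common
point would make `y` close to a rational vector of small denominator, which can only be `c / b`, and
primitivity rules that out. Otherwise counting the overlapping pairs of numerators bounds their
overlap by the product of their measures plus a term governed by `gcd(q, r)`. The decay of `ψ`
allows the threshold in this dichotomy to be a power of `q`, so that the latter terms, which a
divisor sum controls, are negligible on average. Sets from far apart blocks are quasi-independent
when `1 / q ≤ ψ(q)`; the remaining `q` contribute a convergent series because the dimension is at
least two, and among the blocks of one parity no two are adjacent. So the restricted sets are
quasi-independent on average, and a localized Kochen–Stone lemma gives full measure.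
-/

/-! ### Divisor sums -/

lemma add_one_le_div_mul_pow {t : ℝ} (ht : 1 < t) (v : ℕ) : (v : ℝ) + 1 ≤ t / (t - 1) * t ^ v := by
  have hpos : 0 < t - 1 := sub_pos.2 ht
  have bernoulli : 1 + v * (t - 1) ≤ t ^ v := by
    simpa using one_add_mul_le_pow (show -2 ≤ t - 1 by linarith) v
  calc (v : ℝ) + 1 ≤ v * t + t / (t - 1) := by
        gcongr
        · exact le_mul_of_one_le_right v.cast_nonneg ht.le
        · rw [one_le_div hpos]; linarith
    _ = t / (t - 1) * (1 + v * (t - 1)) := by field_simp; ring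
    _ ≤ t / (t - 1) * t ^ v := by gcongr

lemma rpow_eq_prod_primeFactors {n : ℕ} (hn : n ≠ 0) (ε : ℝ) :
    (n : ℝ) ^ ε = ∏ p ∈ n.primeFactors, ((p : ℝ) ^ ε) ^ n.factorization p := by
  conv_lhs => rw [← Nat.prod_factorization_pow_eq_self hn, Finsupp.prod, Nat.support_factorization]
  push_cast
  rw [← Real.finsetProd_rpow _ _ fun _ _ ↦ by positivity]
  exact Finset.prod_congr rfl fun p _ ↦ Real.rpow_pow_comm p.cast_nonneg ε _ |>.symm

/-- Only the primes with `p ^ ε < 2` contribute a factor exceeding `1` to `d(n) / n ^ ε`. -/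
lemma exists_card_divisors_le_mul_rpow {ε : ℝ} (hε : 0 < ε) :
    ∃ C : ℝ, 0 < C ∧ ∀ n : ℕ, n ≠ 0 → (n.divisors.card : ℝ) ≤ C * (n : ℝ) ^ ε := by
  obtain ⟨P, hP⟩ := exists_nat_ge ((2 : ℝ) ^ (1 / ε))
  have htwo : (1 : ℝ) < 2 ^ ε := Real.one_lt_rpow one_lt_two hε
  set K : ℝ := 2 ^ ε / (2 ^ ε - 1)
  have hK : 1 ≤ K := (one_le_div (sub_pos.2 htwo)).2 (by linarith)
  have local_bound (p : ℕ) (hp : 2 ≤ p) (v : ℕ) :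
      (v : ℝ) + 1 ≤ (if p < P then K else 1) * ((p : ℝ) ^ ε) ^ v := by
    split_ifs with hpP
    · calc (v : ℝ) + 1 ≤ K * ((2 : ℝ) ^ ε) ^ v := add_one_le_div_mul_pow htwo v
        _ ≤ K * ((p : ℝ) ^ ε) ^ v := by gcongr; exact_mod_cast hp
    · have large : (2 : ℝ) ≤ (p : ℝ) ^ ε := by
        rw [← Real.rpow_inv_le_iff_of_pos zero_le_two p.cast_nonneg hε, ← one_div]
        exact hP.trans (by exact_mod_cast not_lt.1 hpP)
      calc (v : ℝ) + 1 ≤ 2 ^ v := by exact_mod_cast Nat.lt_two_pow_self (n := v)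
        _ ≤ 1 * ((p : ℝ) ^ ε) ^ v := by rw [one_mul]; gcongr
  refine ⟨K ^ P, by positivity, fun n hn ↦ ?_⟩
  calc (n.divisors.card : ℝ) = ∏ p ∈ n.primeFactors, ((n.factorization p : ℝ) + 1) := by
        rw [Nat.card_divisors hn]; push_cast; rfl
    _ ≤ ∏ p ∈ n.primeFactors, (if p < P then K else 1) * ((p : ℝ) ^ ε) ^ n.factorization p :=
        Finset.prod_le_prod (fun _ _ ↦ by positivity) fun p hp ↦
          local_bound p (Nat.prime_of_mem_primeFactors hp).two_le _
    _ = K ^ (n.primeFactors.filter (· < P)).card * (n : ℝ) ^ ε := by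
        rw [Finset.prod_mul_distrib, rpow_eq_prod_primeFactors hn, Finset.prod_ite]
        simp
    _ ≤ K ^ P * (n : ℝ) ^ ε := by
        gcongr
        calc (n.primeFactors.filter (· < P)).card ≤ (Finset.range P).card :=
              Finset.card_le_card fun p hp ↦ by simpa using (Finset.mem_filter.1 hp).2
          _ = P := Finset.card_range P

lemma isLittleO_natCast_rpow {s t : ℝ} (hst : s < t) :
    (fun n : ℕ ↦ (n : ℝ) ^ s) =o[atTop] fun n : ℕ ↦ (n : ℝ) ^ t := by
  refine (Asymptotics.isLittleO_iff_tendsto' ?_).2 ?_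
  · filter_upwards [eventually_gt_atTop 0] with n hn h
    exact absurd h (by positivity)
  · refine ((tendsto_rpow_neg_atTop (sub_pos.2 hst)).comp tendsto_natCast_atTop_atTop).congr' ?_
    filter_upwards [eventually_gt_atTop 0] with n hn
    rw [← Real.rpow_sub (by positivity), ← neg_sub t s, Function.comp_apply]

lemma isLittleO_card_divisors :
    (fun n : ℕ ↦ (n.divisors.card : ℝ)) =o[atTop] fun n : ℕ ↦ (n : ℝ) := by
  obtain ⟨C, -, hC⟩ := exists_card_divisors_le_mul_rpow (ε := 1 / 2) (by norm_num)
  have hO : (fun n : ℕ ↦ (n.divisors.card : ℝ)) =O[atTop] fun n : ℕ ↦ (n : ℝ) ^ (1 / 2 : ℝ) := by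
    refine Asymptotics.IsBigO.of_bound C ?_
    filter_upwards [eventually_ne_atTop 0] with n hn
    rw [Real.norm_natCast, Real.norm_of_nonneg (by positivity)]
    exact hC n hn
  simpa only [Real.rpow_one] using hO.trans_isLittleO (isLittleO_natCast_rpow one_half_lt_one)

lemma sum_gcd_div_rpow_le {s : ℝ} (hs : 1 < s) {q : ℕ} (hq : q ≠ 0) (T : Finset ℕ) :
    ∑ r ∈ T, ((q.gcd r : ℝ) / r) ^ s ≤ q.divisors.card * ∑' m : ℕ, (1 / (m : ℝ)) ^ s := by
  have summable : Summable fun m : ℕ ↦ (1 / (m : ℝ)) ^ s := by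
    simpa [Real.inv_rpow] using Real.summable_nat_rpow_inv.2 hs
  calc ∑ r ∈ T, ((q.gcd r : ℝ) / r) ^ s
      ≤ ∑ r ∈ T, ∑ d ∈ q.divisors, if d ∣ r then ((d : ℝ) / r) ^ s else 0 := by
        refine Finset.sum_le_sum fun r _ ↦ ?_
        simpa [Nat.gcd_dvd_right] using
          Finset.single_le_sum (f := fun d : ℕ ↦ if d ∣ r then ((d : ℝ) / r) ^ s else 0)
            (fun d _ ↦ by positivity) (Nat.mem_divisors.2 ⟨q.gcd_dvd_left r, hq⟩)
    _ = ∑ d ∈ q.divisors, ∑ r ∈ T with d ∣ r, ((d : ℝ) / r) ^ s := by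
        rw [Finset.sum_comm]; simp only [Finset.sum_filter]
    _ ≤ ∑ d ∈ q.divisors, ∑' m : ℕ, (1 / (m : ℝ)) ^ s := by
        refine Finset.sum_le_sum fun d hd ↦ ?_
        have hd0 : d ≠ 0 := (Nat.pos_of_mem_divisors hd).ne'
        have inj : Set.InjOn (· / d) (T.filter (d ∣ ·) : Set ℕ) := fun r hr r' hr' h ↦
          (Nat.div_left_inj (Finset.mem_filter.1 hr).2 (Finset.mem_filter.1 hr').2).1 h
        calc ∑ r ∈ T with d ∣ r, ((d : ℝ) / r) ^ s
            = ∑ r ∈ T with d ∣ r, (1 / ((r / d : ℕ) : ℝ)) ^ s := by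
              refine Finset.sum_congr rfl fun r hr ↦ ?_
              rw [Nat.cast_div (Finset.mem_filter.1 hr).2 (by exact_mod_cast hd0), one_div_div]
          _ = ∑ m ∈ (T.filter (d ∣ ·)).image (· / d), (1 / (m : ℝ)) ^ s :=
              (Finset.sum_image (f := fun m : ℕ ↦ (1 / (m : ℝ)) ^ s) inj).symm
          _ ≤ ∑' m : ℕ, (1 / (m : ℝ)) ^ s := summable.sum_le_tsum _ fun m _ ↦ by positivity
    _ = q.divisors.card * ∑' m : ℕ, (1 / (m : ℝ)) ^ s := by rw [Finset.sum_const, nsmul_eq_mul]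

/-! ### A localized converse of the Borel–Cantelli lemma -/

section BorelCantelli

variable {α : Type*} [MeasurableSpace α] {μ : Measure α}

lemma sq_sum_measureReal_inter_le {ι : Type*} {A : ι → Set α} {B : Set α} (s : Finset ι)
    (hA : ∀ i, MeasurableSet (A i)) (hB : MeasurableSet B)
    (hAμ : ∀ i, μ (A i) ≠ ⊤ := by finiteness) (hBμ : μ B ≠ ⊤ := by finiteness) :
    (∑ i ∈ s, μ.real (A i ∩ B)) ^ 2 ≤
      (∑ i ∈ s, ∑ j ∈ s, μ.real (A i ∩ A j)) * μ.real B := by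
  let f (i : ι) : Lp ℝ 2 μ := indicatorConstLp 2 (hA i) (hAμ i) 1
  let g : Lp ℝ 2 μ := indicatorConstLp 2 hB hBμ 1
  have cauchy_schwarz := real_inner_mul_inner_self_le (∑ i ∈ s, f i) g
  simp only [sum_inner, inner_sum, f, g, L2.real_inner_indicatorConstLp_one_indicatorConstLp_one,
    Set.inter_self] at cauchy_schwarz
  rwa [Finset.sum_comm, ← sq] at cauchy_schwarz

lemma sum_sum_measureReal_inter_mono {ι : Type*} (A : ι → Set α) {s t : Finset ι} (hst : s ⊆ t) :
    ∑ i ∈ s, ∑ j ∈ s, μ.real (A i ∩ A j) ≤ ∑ i ∈ t, ∑ j ∈ t, μ.real (A i ∩ A j) := by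
  simp only [← Finset.sum_product']
  exact Finset.sum_le_sum_of_subset_of_nonneg (Finset.product_subset_product hst hst)
    fun _ _ _ ↦ measureReal_nonneg

lemma le_of_eventually_mul_sq_sub_le {ι : Type*} {l : Filter ι} [l.NeBot] {σ : ι → ℝ}
    {a b s : ℝ} (hσ : Tendsto σ l atTop)
    (h : ∀ᶠ i in l, a * (σ i - s) ^ 2 ≤ b * (σ i ^ 2 + σ i)) : a ≤ b := by
  have inv : Tendsto (fun i ↦ (σ i)⁻¹) l (nhds 0) := tendsto_inv_atTop_zero.comp hσ
  have left : Tendsto (fun i ↦ a * (1 - s * (σ i)⁻¹) ^ 2) l (nhds a) := by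
    simpa using (((inv.const_mul s).const_sub 1).pow 2).const_mul a
  have right : Tendsto (fun i ↦ b * (1 + (σ i)⁻¹)) l (nhds b) := by
    simpa using (inv.const_add 1).const_mul b
  refine le_of_tendsto_of_tendsto left right ?_
  filter_upwards [h, hσ.eventually_gt_atTop 0] with i hi hpos
  calc a * (1 - s * (σ i)⁻¹) ^ 2 = a * (σ i - s) ^ 2 / σ i ^ 2 := by field_simp
    _ ≤ b * (σ i ^ 2 + σ i) / σ i ^ 2 := by gcongr
    _ = b * (1 + (σ i)⁻¹) := by field_simp

section KochenStone

variable [IsFiniteMeasure μ] {A : ℕ → Set α} {U : Set α} {w : ℕ → ℝ} {C c : ℝ}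

lemma sq_le_mul_measureReal_biUnion_inter (hA : ∀ q, MeasurableSet (A q)) (hU : MeasurableSet U)
    (hw : ∀ q, 0 ≤ w q) (hdiv : Tendsto (fun n ↦ ∑ q ∈ Finset.range n, w q) atTop atTop)
    (hpair : ∀ n, ∑ q ∈ Finset.range n, ∑ r ∈ Finset.range n, μ.real (A q ∩ A r) ≤
      C * ((∑ q ∈ Finset.range n, w q) ^ 2 + ∑ q ∈ Finset.range n, w q))
    (hc : 0 ≤ c) {m : ℕ} (hlow : ∀ q ≥ m, c * w q ≤ μ.real (A q ∩ U)) :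
    c ^ 2 ≤ C * μ.real ((⋃ q ≥ m, A q) ∩ U) := by
  set B : Set α := (⋃ q ≥ m, A q) ∩ U
  have hB : MeasurableSet B := (MeasurableSet.biUnion (Set.to_countable _) fun q _ ↦ hA q).inter hU
  have inter_B (q : ℕ) (hmq : m ≤ q) : c * w q ≤ μ.real (A q ∩ B) :=
    (hlow q hmq).trans <| measureReal_mono fun x hx ↦ ⟨hx.1, Set.mem_biUnion hmq hx.1, hx.2⟩
  refine le_of_eventually_mul_sq_sub_le (s := ∑ q ∈ Finset.range m, w q) hdiv ?_
  filter_upwards [eventually_ge_atTop m] with n hmn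
  have pairs := (sum_sum_measureReal_inter_mono (μ := μ) A
    (fun q hq ↦ Finset.mem_range.2 (Finset.mem_Ico.1 hq).2 :
      Finset.Ico m n ⊆ Finset.range n)).trans (hpair n)
  rw [← Finset.sum_Ico_eq_sub _ hmn]
  calc c ^ 2 * (∑ q ∈ Finset.Ico m n, w q) ^ 2
      = (∑ q ∈ Finset.Ico m n, c * w q) ^ 2 := by rw [← Finset.mul_sum, mul_pow]
    _ ≤ (∑ q ∈ Finset.Ico m n, μ.real (A q ∩ B)) ^ 2 :=
        pow_le_pow_left₀ (Finset.sum_nonneg fun q _ ↦ mul_nonneg hc (hw q))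
          (Finset.sum_le_sum fun q hq ↦ inter_B q (Finset.mem_Ico.1 hq).1) 2
    _ ≤ (∑ q ∈ Finset.Ico m n, ∑ r ∈ Finset.Ico m n, μ.real (A q ∩ A r)) * μ.real B :=
        sq_sum_measureReal_inter_le _ hA hB
    _ ≤ C * ((∑ q ∈ Finset.range n, w q) ^ 2 + ∑ q ∈ Finset.range n, w q) * μ.real B := by gcongr
    _ = C * μ.real B * ((∑ q ∈ Finset.range n, w q) ^ 2 + ∑ q ∈ Finset.range n, w q) := by ring

/-- The Kochen–Stone lemma, localized to `U`. -/
lemma sq_le_mul_measureReal_limsup_inter (hA : ∀ q, MeasurableSet (A q)) (hU : MeasurableSet U)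
    (hw : ∀ q, 0 ≤ w q) (hdiv : Tendsto (fun n ↦ ∑ q ∈ Finset.range n, w q) atTop atTop)
    (hpair : ∀ n, ∑ q ∈ Finset.range n, ∑ r ∈ Finset.range n, μ.real (A q ∩ A r) ≤
      C * ((∑ q ∈ Finset.range n, w q) ^ 2 + ∑ q ∈ Finset.range n, w q))
    (hc : 0 ≤ c) (hlow : ∀ᶠ q in atTop, c * w q ≤ μ.real (A q ∩ U)) :
    c ^ 2 ≤ C * μ.real (limsup A atTop ∩ U) := by
  obtain ⟨m₀, hm₀⟩ := eventually_atTop.1 hlow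
  set B : ℕ → Set α := fun m ↦ (⋃ q ≥ m, A q) ∩ U
  have hB (m : ℕ) : MeasurableSet (B m) :=
    (MeasurableSet.biUnion (Set.to_countable _) fun q _ ↦ hA q).inter hU
  have decreasing : Antitone B := fun m n hmn ↦
    Set.inter_subset_inter_left _ <| Set.biUnion_subset_biUnion_left fun q hq ↦ hmn.trans hq
  have iInter_B : ⋂ m, B m = limsup A atTop ∩ U := by
    rw [limsup_eq_iInf_iSup_of_nat, ← Set.iInter_inter]; rfl
  have tendsto : Tendsto (fun m ↦ C * μ.real (B m)) atTop
      (nhds (C * μ.real (limsup A atTop ∩ U))) := by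
    rw [← iInter_B]
    exact ((ENNReal.tendsto_toReal (by finiteness)).comp
      (tendsto_measure_iInter_atTop (fun m ↦ (hB m).nullMeasurableSet) decreasing
        ⟨0, by finiteness⟩)).const_mul C
  exact ge_of_tendsto tendsto <| eventually_atTop.2 ⟨m₀, fun m hm ↦
    sq_le_mul_measureReal_biUnion_inter hA hU hw hdiv hpair hc fun q hq ↦ hm₀ q (hm.trans hq)⟩

end KochenStone

lemma ae_mem_of_mul_sq_measureReal_le [TopologicalSpace α] [OpensMeasurableSpace α]
    [IsFiniteMeasure μ] [μ.OuterRegular] {E V : Set α} {κ : ℝ} (hE : MeasurableSet E)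
    (hV : IsOpen V) (hκ : 0 < κ)
    (h : ∀ U ⊆ V, IsOpen U → κ * μ.real U ^ 2 ≤ μ.real (E ∩ U)) : ∀ᵐ x ∂μ, x ∈ V → x ∈ E := by
  suffices null : μ (V \ E) = 0 by
    filter_upwards [measure_eq_zero_iff_ae_notMem.1 null] with x hx hxV
    by_contra hxE
    exact hx ⟨hxV, hxE⟩
  by_contra hne
  have hpos : 0 < μ.real (V \ E) := ENNReal.toReal_pos hne (by finiteness)
  obtain ⟨W, hFW, hW, -, hWF⟩ := (hV.measurableSet.diff hE).exists_isOpen_sdiff_lt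
    (measure_ne_top μ _) (ENNReal.ofReal_pos.2 (mul_pos hκ (pow_pos hpos 2))).ne'
  have hcover : V \ E ⊆ W ∩ V := fun x hx ↦ ⟨hFW hx, hx.1⟩
  have small : μ.real (E ∩ (W ∩ V)) < κ * μ.real (V \ E) ^ 2 := by
    refine (measureReal_mono fun x hx ↦ ?_).trans_lt (ENNReal.toReal_lt_of_lt_ofReal hWF)
    exact ⟨hx.2.1, fun hxF ↦ hxF.2 hx.1⟩
  have large : κ * μ.real (V \ E) ^ 2 ≤ μ.real (E ∩ (W ∩ V)) :=
    calc κ * μ.real (V \ E) ^ 2 ≤ κ * μ.real (W ∩ V) ^ 2 := by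
          have := measureReal_mono (μ := μ) hcover
          gcongr
      _ ≤ μ.real (E ∩ (W ∩ V)) := h _ Set.inter_subset_right (hW.inter hV)
  exact small.not_ge large

lemma exists_finset_pairwiseDisjoint_closedBall {α : Type*} [MetricSpace α]
    [SecondCountableTopology α] [HasBesicovitchCovering α] [MeasurableSpace α]
    [OpensMeasurableSpace α] (μ : Measure α) [IsFiniteMeasure μ] {U : Set α} (hU : IsOpen U) :
    ∃ (T : Finset α) (r : α → ℝ), (∀ x ∈ T, 0 < r x ∧ Metric.closedBall x (r x) ⊆ U) ∧
      (T : Set α).PairwiseDisjoint (fun x ↦ Metric.closedBall x (r x)) ∧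
      μ.real U / 2 ≤ ∑ x ∈ T, μ.real (Metric.closedBall x (r x)) := by
  obtain hzero | hpos := eq_zero_or_pos (μ U)
  · exact ⟨∅, 0, by simp, by simp, by simp [measureReal_def, hzero]⟩
  obtain ⟨t, r, ht, -, hr, hcov, hdisj⟩ := Besicovitch.exists_disjoint_closedBall_covering_ae
    μ (fun x ↦ {ρ | Metric.closedBall x ρ ⊆ U}) U (fun x hx δ hδ ↦ by
      obtain ⟨ε, hε, hball⟩ := Metric.nhds_basis_closedBall.mem_iff.1 (hU.mem_nhds hx)
      exact ⟨min ε (δ / 2),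
        (Metric.closedBall_subset_closedBall (min_le_left _ _)).trans hball,
        by positivity, (min_le_right _ _).trans_lt (half_lt_self hδ)⟩)
    (fun _ ↦ 1) (fun _ _ ↦ one_pos)
  have covered : μ U ≤ ⨆ s : Finset t, ∑ x ∈ s, μ (Metric.closedBall (x : α) (r x)) := by
    rw [← ENNReal.tsum_eq_iSup_sum,
      ← measure_biUnion ht hdisj fun _ _ ↦ measurableSet_closedBall]
    exact measure_mono_ae (measure_eq_zero_iff_ae_notMem.1 hcov |>.mono fun x hx hxU ↦
      by_contra fun hx' ↦ hx ⟨hxU, hx'⟩)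
  obtain ⟨s, hs⟩ := lt_iSup_iff.1 <|
    (ENNReal.half_lt_self hpos.ne' (by finiteness)).trans_le covered
  refine ⟨s.map (.subtype _), r, ?_, hdisj.subset ?_, ?_⟩
  · simp only [Finset.mem_map, Function.Embedding.subtype_apply]
    rintro _ ⟨x, -, rfl⟩
    exact ⟨(hr x x.2).2.1, (hr x x.2).1⟩
  · simp
  · have := ENNReal.toReal_mono (by simp [ENNReal.sum_eq_top]) hs.le
    rw [ENNReal.toReal_sum (by finiteness), ENNReal.toReal_div] at this
    simpa [measureReal_def] using this

variable {A : ℕ → Set α} {w : ℕ → ℝ} {c : ℝ} {V : Set α}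

lemma eventually_le_measureReal_inter_of_closedBall [MetricSpace α] [SecondCountableTopology α]
    [HasBesicovitchCovering α] [OpensMeasurableSpace α] [IsFiniteMeasure μ] {U : Set α}
    (hw : ∀ q, 0 ≤ w q) (hc : 0 ≤ c)
    (hball : ∀ z ρ, 0 < ρ → Metric.closedBall z ρ ⊆ V → ∀ᶠ q in atTop,
      c * μ.real (Metric.closedBall z ρ) * w q ≤ μ.real (A q ∩ Metric.closedBall z ρ))
    (hU : IsOpen U) (hUV : U ⊆ V) :
    ∀ᶠ q in atTop, c / 2 * μ.real U * w q ≤ μ.real (A q ∩ U) := by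
  obtain ⟨T, r, hr, hdisj, hhalf⟩ := exists_finset_pairwiseDisjoint_closedBall μ hU
  have balls : ∀ᶠ q in atTop, ∀ x ∈ T, c * μ.real (Metric.closedBall x (r x)) * w q ≤
      μ.real (A q ∩ Metric.closedBall x (r x)) :=
    (eventually_all_finset T).2 fun x hx ↦ hball x _ (hr x hx).1 ((hr x hx).2.trans hUV)
  filter_upwards [balls] with q hq
  have hcw : 0 ≤ c * w q := mul_nonneg hc (hw q)
  calc c / 2 * μ.real U * w q = c * w q * (μ.real U / 2) := by ring
    _ ≤ c * w q * ∑ x ∈ T, μ.real (Metric.closedBall x (r x)) := by gcongr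
    _ = ∑ x ∈ T, c * μ.real (Metric.closedBall x (r x)) * w q := by
        rw [Finset.mul_sum]; exact Finset.sum_congr rfl fun _ _ ↦ by ring
    _ ≤ ∑ x ∈ T, (μ.restrict (A q)).real (Metric.closedBall x (r x)) := by
        refine Finset.sum_le_sum fun x hx ↦ (hq x hx).trans_eq ?_
        rw [measureReal_restrict_apply measurableSet_closedBall, Set.inter_comm]
    _ = (μ.restrict (A q)).real (⋃ x ∈ T, Metric.closedBall x (r x)) :=
        (measureReal_biUnion_finset hdisj fun _ _ ↦ measurableSet_closedBall).symm
    _ ≤ (μ.restrict (A q)).real U := measureReal_mono <| Set.iUnion₂_subset fun x hx ↦ (hr x hx).2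
    _ = μ.real (A q ∩ U) := by
        rw [measureReal_restrict_apply hU.measurableSet, Set.inter_comm]

theorem ae_frequently_mem_of_sum_sum_measureReal_inter_le [MetricSpace α]
    [SecondCountableTopology α] [HasBesicovitchCovering α] [BorelSpace α] [IsFiniteMeasure μ]
    {C : ℝ} (hA : ∀ q, MeasurableSet (A q)) (hV : IsOpen V) (hw : ∀ q, 0 ≤ w q)
    (hdiv : Tendsto (fun n ↦ ∑ q ∈ Finset.range n, w q) atTop atTop) (hC : 0 < C)
    (hpair : ∀ n, ∑ q ∈ Finset.range n, ∑ r ∈ Finset.range n, μ.real (A q ∩ A r) ≤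
      C * ((∑ q ∈ Finset.range n, w q) ^ 2 + ∑ q ∈ Finset.range n, w q)) (hc : 0 < c)
    (hball : ∀ z ρ, 0 < ρ → Metric.closedBall z ρ ⊆ V → ∀ᶠ q in atTop,
      c * μ.real (Metric.closedBall z ρ) * w q ≤ μ.real (A q ∩ Metric.closedBall z ρ)) :
    ∀ᵐ x ∂μ, x ∈ V → ∃ᶠ q in atTop, x ∈ A q := by
  have limsup_large (U : Set α) (hUV : U ⊆ V) (hU : IsOpen U) :
      (c / 2) ^ 2 / C * μ.real U ^ 2 ≤ μ.real (limsup A atTop ∩ U) := by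
    have := sq_le_mul_measureReal_limsup_inter hA hU.measurableSet hw hdiv hpair (by positivity)
      (eventually_le_measureReal_inter_of_closedBall hw hc.le hball hU hUV)
    rwa [div_mul_eq_mul_div, div_le_iff₀' hC, ← mul_pow]
  have ae_limsup := ae_mem_of_mul_sq_measureReal_le (MeasurableSet.measurableSet_limsup hA) hV
    (by positivity) limsup_large
  simpa only [mem_limsup_iff_frequently_mem] using ae_limsup

end BorelCantelli

/-! ### Overlaps on the line -/

lemma card_le_div_add_one_of_dvd_sub {T : Finset ℤ} {n : ℕ} {L : ℝ} (hn : 0 < n) (hL : 0 ≤ L)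
    (hdiff : ∀ s ∈ T, ∀ t ∈ T, (s : ℝ) - t ≤ L) (hdvd : ∀ s ∈ T, ∀ t ∈ T, (n : ℤ) ∣ s - t) :
    (T.card : ℝ) ≤ L / n + 1 := by
  obtain rfl | hT := T.eq_empty_or_nonempty
  · rw [Finset.card_empty, Nat.cast_zero]; positivity
  set m := T.min' hT
  have hm : m ∈ T := T.min'_mem hT
  have quotient {t : ℤ} (ht : t ∈ T) : (t - m) / n * n = t - m :=
    Int.ediv_mul_cancel (hdvd t ht m hm)
  have inj : Set.InjOn (fun t : ℤ ↦ (t - m) / n) T := fun s hs t ht hst ↦ by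
    have hs' := quotient hs
    rw [show (s - m) / n = (t - m) / (n : ℤ) from hst, quotient ht] at hs'
    linarith
  have maps : ∀ t ∈ T, (t - m) / (n : ℤ) ∈ Finset.Icc 0 ⌊L / n⌋ := fun t ht ↦ by
    rw [Finset.mem_Icc, Int.le_floor, le_div_iff₀ (by positivity)]
    refine ⟨Int.ediv_nonneg (sub_nonneg.2 (T.min'_le t ht)) n.cast_nonneg, ?_⟩
    calc (((t - m) / n : ℤ) : ℝ) * n = t - m := by exact_mod_cast quotient ht
      _ ≤ L := hdiff t ht m hm
  have card_le := Finset.card_le_card_of_injOn _ maps inj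
  rw [Int.card_Icc, sub_zero, ← Int.floor_add_one, Int.floor_toNat] at card_le
  exact (Nat.le_floor_iff (by positivity)).1 card_le

lemma abs_cross_sub_lt {g u v x y p s a b : ℝ} (hu : 0 ≤ u) (hv : 0 < v)
    (hp : |u * g * x - p - y| < a) (hs : |v * g * x - s - y| < b) :
    |u * s - v * p - (v - u) * y| < v * a + u * b := by
  calc |u * s - v * p - (v - u) * y|
      = |v * (u * g * x - p - y) - u * (v * g * x - s - y)| := by congr 1; ring
    _ ≤ v * |u * g * x - p - y| + u * |v * g * x - s - y| := by
        simpa only [abs_mul, abs_of_pos hv, abs_of_nonneg hu] using abs_sub (v * _) (u * _)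
    _ < v * a + u * b := add_lt_add_of_lt_of_le (mul_lt_mul_of_pos_left hp hv)
        (mul_le_mul_of_nonneg_left hs.le hu)

/-- The real numbers `x` for which `q * x - y` lies within `a` of an integer. -/
def closeSet (q a y : ℝ) : Set ℝ := {x | ∃ p : ℤ, |q * x - p - y| < a}

/-- The pairs of numerators `(p, s)` of the intervals of `closeSet q a y` and of `closeSet r b y`
that meet inside `[0, 1)`. -/
def numeratorPairs (q r a b y : ℝ) : Set (ℤ × ℤ) :=
  {ps | ∃ x ∈ Set.Ico (0 : ℝ) 1, |q * x - ps.1 - y| < a ∧ |r * x - ps.2 - y| < b}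

lemma numerator_mem_Ioo {q a x y : ℝ} {p : ℤ} (hq : 0 ≤ q) (hx : x ∈ Set.Ico (0 : ℝ) 1)
    (hp : |q * x - p - y| < a) : (p : ℝ) ∈ Set.Ioo (-y - a) (q - y + a) := by
  have lower : 0 ≤ q * x := mul_nonneg hq hx.1
  have upper : q * x ≤ q := mul_le_of_le_one_right hq hx.2.le
  obtain ⟨h₁, h₂⟩ := abs_lt.1 hp
  constructor <;> linarith

lemma finite_numeratorPairs {q r : ℝ} (hq : 0 ≤ q) (hr : 0 ≤ r) (a b y : ℝ) :
    (numeratorPairs q r a b y).Finite := by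
  have finite_Ioo (l m : ℝ) : {p : ℤ | (p : ℝ) ∈ Set.Ioo l m}.Finite :=
    (Set.finite_Icc ⌈l⌉ ⌊m⌋).subset fun p hp ↦
      ⟨Int.ceil_le.2 hp.1.le, Int.le_floor.2 hp.2.le⟩
  refine ((finite_Ioo (-y - a) (q - y + a)).prod (finite_Ioo (-y - b) (r - y + b))).subset ?_
  rintro ⟨p, s⟩ ⟨x, hx, hp, hs⟩
  exact ⟨numerator_mem_Ioo hq hx hp, numerator_mem_Ioo hr hx hs⟩

section PairCount

variable {g u v : ℕ} {a b y : ℝ} {T : Finset (ℤ × ℤ)}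

lemma card_le_of_const_cross (hg : 0 < g) (hu : 0 < u) (huv : u.Coprime v) (ha : 0 ≤ a)
    (ha' : a ≤ 1 / 2) (hT : (T : Set (ℤ × ℤ)) ⊆ numeratorPairs (u * g) (v * g) a b y) (n : ℤ)
    (hn : ∀ ps ∈ T, u * ps.2 - v * ps.1 = n) : T.card ≤ 3 * g := by
  have inj : Set.InjOn Prod.fst (T : Set (ℤ × ℤ)) := fun ps hps ps' hps' h ↦
    Prod.ext h <| mul_left_cancel₀ (by positivity : (u : ℤ) ≠ 0) <| by
      linarith [hn ps hps, hn ps' hps', congrArg ((v : ℤ) * ·) h]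
  have dvd_sub : ∀ p ∈ T.image Prod.fst, ∀ p' ∈ T.image Prod.fst, (u : ℤ) ∣ p - p' := by
    simp only [Finset.mem_image]
    rintro _ ⟨ps, hps, rfl⟩ _ ⟨ps', hps', rfl⟩
    refine (Nat.isCoprime_iff_coprime.2 huv).dvd_of_dvd_mul_left ⟨ps.2 - ps'.2, ?_⟩
    linarith [hn ps hps, hn ps' hps']
  have sub_le : ∀ p ∈ T.image Prod.fst, ∀ p' ∈ T.image Prod.fst,
      (p : ℝ) - p' ≤ u * g + 2 * a := by
    simp only [Finset.mem_image]
    rintro _ ⟨ps, hps, rfl⟩ _ ⟨ps', hps', rfl⟩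
    obtain ⟨x, hx, hp, -⟩ := hT hps
    obtain ⟨x', hx', hp', -⟩ := hT hps'
    linarith [(numerator_mem_Ioo (by positivity) hx hp).2,
      (numerator_mem_Ioo (by positivity) hx' hp').1]
  have card_le := card_le_div_add_one_of_dvd_sub hu (by positivity) sub_le dvd_sub
  rw [Finset.card_image_of_injOn inj] at card_le
  have hu' : (1 : ℝ) ≤ u := by exact_mod_cast hu
  have hg' : (1 : ℝ) ≤ g := by exact_mod_cast hg
  suffices (T.card : ℝ) ≤ 3 * g by exact_mod_cast this
  calc (T.card : ℝ) ≤ (u * g + 2 * a) / u + 1 := card_le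
    _ = g + 2 * a / u + 1 := by field_simp
    _ ≤ g + 1 + 1 := by gcongr; rw [div_le_one (by positivity)]; linarith
    _ ≤ 3 * g := by linarith

/-- The cross difference `u * s - v * p` lies within `v * a + u * b` of `(v - u) * y`, which bounds
the number of its values. -/
lemma card_numeratorPairs_le (hg : 0 < g) (hu : 0 < u) (hv : 0 < v) (huv : u.Coprime v)
    (ha : 0 ≤ a) (ha' : a ≤ 1 / 2) (hb : 0 ≤ b)
    (hT : (T : Set (ℤ × ℤ)) ⊆ numeratorPairs (u * g) (v * g) a b y) :
    (T.card : ℝ) ≤ 3 * g * (2 * (v * a + u * b) + 1) := by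
  let cross (ps : ℤ × ℤ) : ℤ := u * ps.2 - v * ps.1
  have values : ((T.image cross).card : ℝ) ≤ 2 * (v * a + u * b) + 1 := by
    have diff : ∀ m ∈ T.image cross, ∀ n ∈ T.image cross,
        (m : ℝ) - n ≤ 2 * (v * a + u * b) := by
      simp only [Finset.mem_image]
      rintro _ ⟨ps, hps, rfl⟩ _ ⟨ps', hps', rfl⟩
      obtain ⟨x, -, hp, hs⟩ := hT hps
      obtain ⟨x', -, hp', hs'⟩ := hT hps'
      have near := abs_lt.1 (abs_cross_sub_lt u.cast_nonneg (by positivity) hp hs)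
      have near' := abs_lt.1 (abs_cross_sub_lt u.cast_nonneg (by positivity) hp' hs')
      simp only [cross, Int.cast_sub, Int.cast_mul, Int.cast_natCast]
      linarith
    simpa using card_le_div_add_one_of_dvd_sub one_pos (by positivity) diff (by simp)
  calc (T.card : ℝ) ≤ (3 * g : ℕ) * (T.image cross).card := by
        exact_mod_cast T.card_le_mul_card_image _ fun n _ ↦
          card_le_of_const_cross hg hu huv ha ha'
            (subset_trans (Finset.coe_subset.2 (Finset.filter_subset _ _)) hT) n
            fun ps hps ↦ (Finset.mem_filter.1 hps).2
    _ ≤ 3 * g * (2 * (v * a + u * b) + 1) := by push_cast; gcongr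

end PairCount

lemma volume_abs_mul_sub_sub_lt {q : ℝ} (hq : 0 < q) (p y a : ℝ) :
    volume {x : ℝ | |q * x - p - y| < a} = ENNReal.ofReal (2 * (a / q)) := by
  have : {x : ℝ | |q * x - p - y| < a} = Metric.ball ((p + y) / q) (a / q) := by
    ext x
    rw [Metric.mem_ball, Real.dist_eq, lt_div_iff₀ hq, ← abs_of_pos hq, ← abs_mul, abs_of_pos hq,
      sub_mul, div_mul_cancel₀ _ hq.ne', mul_comm, ← sub_sub]
    rfl
  rw [this, Real.volume_ball]

lemma add_mul_min_div_le {a b u v : ℝ} (ha : 0 ≤ a) (hb : 0 ≤ b) (hu : 0 < u) (hv : 0 < v) :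
    (v * a + u * b) * min (a / u) (b / v) ≤ 2 * (a * b) :=
  calc (v * a + u * b) * min (a / u) (b / v)
      = v * a * min (a / u) (b / v) + u * b * min (a / u) (b / v) := add_mul ..
    _ ≤ v * a * (b / v) + u * b * (a / u) := by
        gcongr
        exacts [min_le_right _ _, min_le_left _ _]
    _ = 2 * (a * b) := by field_simp; ring

lemma volume_closeSet_inter_closeSet_le {g u v : ℕ} {a b : ℝ} (hg : 0 < g) (hu : 0 < u)
    (hv : 0 < v) (huv : u.Coprime v) (ha : 0 ≤ a) (ha' : a ≤ 1 / 2) (hb : 0 ≤ b) (y : ℝ) :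
    volume (Set.Ico 0 1 ∩ (closeSet (u * g) a y ∩ closeSet (v * g) b y)) ≤
      ENNReal.ofReal (24 * (a * b) + 6 * min (a / u) (b / v)) := by
  have hu' : (0 : ℝ) < u := Nat.cast_pos.2 hu
  have hv' : (0 : ℝ) < v := Nat.cast_pos.2 hv
  set M := min (a / u) (b / v)
  set P := (finite_numeratorPairs (q := u * g) (r := v * g) (by positivity) (by positivity)
    a b y).toFinset
  have hPcoe : (P : Set (ℤ × ℤ)) = numeratorPairs (u * g) (v * g) a b y := Set.Finite.coe_toFinset _
  let I (q p a : ℝ) : Set ℝ := {x | |q * x - p - y| < a}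
  have volume_inter_le (p s : ℝ) :
      volume (I (u * g) p a ∩ I (v * g) s b) ≤ ENNReal.ofReal (2 * (M / g)) := by
    rw [← min_div_div_right g.cast_nonneg, div_div, div_div, mul_min_of_nonneg _ _ zero_le_two,
      ENNReal.ofReal_min]
    refine le_min ((measure_mono Set.inter_subset_left).trans_eq ?_)
      ((measure_mono Set.inter_subset_right).trans_eq ?_) <;>
    exact volume_abs_mul_sub_sub_lt (by positivity) ..
  calc volume (Set.Ico 0 1 ∩ (closeSet (u * g) a y ∩ closeSet (v * g) b y))
      ≤ volume (⋃ ps ∈ P, I (u * g) ps.1 a ∩ I (v * g) ps.2 b) := by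
        refine measure_mono ?_
        rintro x ⟨hx, ⟨p, hp⟩, s, hs⟩
        exact Set.mem_biUnion (x := (p, s)) (hPcoe.symm ▸ ⟨x, hx, hp, hs⟩) ⟨hp, hs⟩
    _ ≤ ∑ ps ∈ P, volume (I (u * g) ps.1 a ∩ I (v * g) ps.2 b) := measure_biUnion_finset_le _ _
    _ ≤ P.card * ENNReal.ofReal (2 * (M / g)) := by
        simpa using Finset.sum_le_card_nsmul P _ _ fun ps _ ↦ volume_inter_le ps.1 ps.2
    _ = ENNReal.ofReal (P.card * (2 * (M / g))) := by
        rw [ENNReal.ofReal_mul P.card.cast_nonneg, ENNReal.ofReal_natCast]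
    _ ≤ ENNReal.ofReal (3 * g * (2 * (v * a + u * b) + 1) * (2 * (M / g))) := by
        have := card_numeratorPairs_le hg hu hv huv ha ha' hb hPcoe.subset
        gcongr
    _ ≤ ENNReal.ofReal (24 * (a * b) + 6 * M) := by
        refine ENNReal.ofReal_le_ofReal ?_
        calc 3 * g * (2 * (v * a + u * b) + 1) * (2 * (M / g))
            = 12 * ((v * a + u * b) * M) + 6 * M := by field_simp; ring
          _ ≤ 24 * (a * b) + 6 * M := by
              linarith [add_mul_min_div_le ha hb hu' hv']

/-! ### Rational models and good sets -/

/-- The integers `a` and `v i` have no common divisor other than `±1`. -/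
def IsPrimitive {ι : Type*} (a : ℤ) (v : ι → ℤ) : Prop :=
  ∀ d : ℤ, d ∣ a → (∀ i, d ∣ v i) → IsUnit d

lemma exists_isPrimitive_smul {ι : Type*} [Finite ι] {a : ℤ} (ha : a ≠ 0) (v : ι → ℤ) :
    ∃ (d b : ℤ) (c : ι → ℤ), d ≠ 0 ∧ a = d * b ∧ (∀ i, v i = d * c i) ∧ IsPrimitive b c := by
  have := Fintype.ofFinite ι
  obtain ⟨w, hw, hgcd⟩ := Finset.extract_gcd (fun i : Option ι ↦ i.elim a v) Finset.univ_nonempty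
  refine ⟨_, w none, fun i ↦ w (some i), ?_, hw none (Finset.mem_univ _),
    fun i ↦ hw (some i) (Finset.mem_univ _), fun d hb hc ↦ ?_⟩
  · rw [Ne, Finset.gcd_eq_zero_iff]
    exact fun h ↦ ha (h none (Finset.mem_univ _))
  · refine isUnit_of_dvd_one (hgcd ▸ Finset.dvd_gcd fun i _ ↦ ?_)
    cases i with
    | none => exact hb
    | some i => exact hc i

lemma IsPrimitive.isCoprime_of_forall_dvd {ι : Type*} {b n : ℤ} {c p : ι → ℤ}
    (h : IsPrimitive b c) (hn : ∀ i, n ∣ b * p i + c i) : IsCoprime n b :=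
  IsRelPrime.isCoprime fun d hdn hdb ↦
    h d hdb fun i ↦ (dvd_add_right (hdb.mul_right (p i))).1 (hdn.trans (hn i))

/-- The rational vector `c / b`, in lowest terms, is the only one that approximates `y` within
`ε / D` with a denominator `|D| ≤ Q`. The value `b = 0` encodes the absence of such
approximations. -/
structure IsRationalModel {ι : Type*} (y : ι → ℝ) (Q ε : ℝ) (b : ℤ) (c : ι → ℤ) : Prop where
  primitive : IsPrimitive b c
  mul_eq_mul : ∀ (D : ℤ) (n : ι → ℤ), D ≠ 0 → |(D : ℝ)| ≤ Q → (∀ i, |D * y i - n i| < ε) →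
    ∀ i, D * c i = b * n i

lemma mul_eq_mul_of_abs_lt {y Q ε : ℝ} {D D' n n' : ℤ} (hQε : 2 * Q * ε ≤ 1) (hD : D ≠ 0)
    (hDQ : |(D : ℝ)| ≤ Q) (hD'Q : |(D' : ℝ)| ≤ Q) (hn : |D * y - n| < ε)
    (hn' : |D' * y - n'| < ε) : D * n' = D' * n := by
  have hε : 0 ≤ ε := (abs_nonneg _).trans hn.le
  have hD₀ : 0 < |(D : ℝ)| := abs_pos.2 (by exact_mod_cast hD)
  suffices |((D * n' - D' * n : ℤ) : ℝ)| < 1 from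
    sub_eq_zero.1 (Int.abs_lt_one_iff.1 (by exact_mod_cast this))
  calc |((D * n' - D' * n : ℤ) : ℝ)| = |D' * (D * y - n) - D * (D' * y - n')| := by
        push_cast; congr 1; ring
    _ ≤ |(D' : ℝ)| * |D * y - n| + |(D : ℝ)| * |D' * y - n'| := by
        simpa only [abs_mul] using abs_sub ((D' : ℝ) * (D * y - n)) (D * (D' * y - n'))
    _ < |(D' : ℝ)| * ε + |(D : ℝ)| * ε := add_lt_add_of_le_of_lt
        (mul_le_mul_of_nonneg_left hn.le (abs_nonneg _)) (mul_lt_mul_of_pos_left hn' hD₀)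
    _ ≤ Q * ε + Q * ε := by gcongr
    _ ≤ 1 := by linarith

lemma exists_isRationalModel {ι : Type*} [Finite ι] [Nonempty ι] (y : ι → ℝ) {Q ε : ℝ}
    (hQε : 2 * Q * ε ≤ 1) : ∃ b c, IsRationalModel y Q ε b c := by
  by_cases h : ∃ (D : ℤ) (n : ι → ℤ), D ≠ 0 ∧ |(D : ℝ)| ≤ Q ∧ ∀ i, |D * y i - n i| < ε
  · obtain ⟨D, n, hD, hDQ, hn⟩ := h
    obtain ⟨d, b, c, hd, hDb, hnc, prim⟩ := exists_isPrimitive_smul hD n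
    refine ⟨b, c, prim, fun D' n' _ hDQ' hn' i ↦ mul_left_cancel₀ hd ?_⟩
    have cross := mul_eq_mul_of_abs_lt hQε hD hDQ hDQ' (hn i) (hn' i)
    rw [hDb, hnc] at cross
    linear_combination -cross
  · refine ⟨0, 1, fun d _ hd ↦ isUnit_of_dvd_one (hd (Classical.arbitrary ι)), ?_⟩
    exact fun D n hD hDQ hn ↦ absurd ⟨D, n, hD, hDQ, hn⟩ h

section GoodSet

variable {ι : Type*} {q r : ℕ} {a a' : ℝ} {y : ι → ℝ} {b b' : ℤ} {c c' : ι → ℤ}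

/-- The points `x` with `|q * x i - p i - y i| < a` for some numerator vector `p` such that the
rational point `(p + c / b) / q` has no common divisor of `q` and of the integers `b * p i + c i`.
For `(b, c) = (1, 0)` this asks for the fraction `p / q` to be in lowest terms. -/
def goodSet (q : ℕ) (a : ℝ) (y : ι → ℝ) (b : ℤ) (c : ι → ℤ) : Set (ι → ℝ) :=
  {x | ∃ p : ι → ℤ, (∀ i, |q * x i - p i - y i| < a) ∧ IsPrimitive q fun i ↦ b * p i + c i}

lemma isOpen_goodSet [Finite ι] : IsOpen (goodSet q a y b c) := by
  have : goodSet q a y b c = ⋃ p : ι → ℤ, ⋃ (_ : IsPrimitive q fun i ↦ b * p i + c i),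
      ⋂ i, {x : ι → ℝ | |q * x i - p i - y i| < a} := by
    ext x
    simp only [goodSet, Set.mem_ofPred_eq, Set.mem_iUnion, Set.mem_iInter, exists_prop, and_comm]
  rw [this]
  exact isOpen_iUnion fun p ↦ isOpen_iUnion fun _ ↦ isOpen_iInter_of_finite fun i ↦
    isOpen_lt (by fun_prop) continuous_const

lemma goodSet_eq_empty [Nonempty ι] (ha : a ≤ 0) : goodSet q a y b c = ∅ := by
  refine Set.eq_empty_iff_forall_notMem.2 fun x ⟨p, hp, _⟩ ↦ ?_
  exact ((hp (Classical.arbitrary ι)).trans_le ha).not_ge (abs_nonneg _)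

lemma mem_closeSet_of_mem_goodSet {x : ι → ℝ} (hx : x ∈ goodSet q a y b c) (i : ι) :
    x i ∈ closeSet q a (y i) :=
  let ⟨p, hp, _⟩ := hx
  ⟨p i, hp i⟩

/-- The half-open unit cube `[0, 1)^ι`. -/
def unitCube (ι : Type*) : Set (ι → ℝ) := Set.univ.pi fun _ ↦ Set.Ico 0 1

lemma measurableSet_unitCube [Countable ι] : MeasurableSet (unitCube ι) :=
  .univ_pi fun _ ↦ measurableSet_Ico

lemma volume_unitCube [Fintype ι] : volume (unitCube ι) = 1 := by
  simp [unitCube, volume_pi_pi]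

lemma measureReal_goodSet_inter_goodSet_le [Fintype ι] (hq : 0 < q) (hr : 0 < r) (ha : 0 ≤ a)
    (ha₂ : a ≤ 1 / 2) (ha' : 0 ≤ a') :
    (volume.restrict (unitCube ι)).real (goodSet q a y b c ∩ goodSet r a' y b' c') ≤
      (30 * max (a * a') (q.gcd r * min (a / q) (a' / r))) ^ Fintype.card ι := by
  set g := q.gcd r
  have hg : 0 < g := Nat.gcd_pos_of_pos_left r hq
  obtain ⟨u, v, huv, hqu, hrv⟩ := Nat.exists_coprime q r
  have hu : 0 < u := Nat.pos_of_mul_pos_right (hqu ▸ hq)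
  have hv : 0 < v := Nat.pos_of_mul_pos_right (hrv ▸ hr)
  have hqu' : (q : ℝ) = u * g := by exact_mod_cast hqu
  have hrv' : (r : ℝ) = v * g := by exact_mod_cast hrv
  have scaled_min : g * min (a / q) (a' / r) = min (a / u) (a' / v) := by
    rw [hqu', hrv', mul_min_of_nonneg _ _ g.cast_nonneg]
    congr 1 <;> field_simp
  have subset : unitCube ι ∩ (goodSet q a y b c ∩ goodSet r a' y b' c') ⊆
      Set.univ.pi fun i ↦ Set.Ico 0 1 ∩ (closeSet (u * g) a (y i) ∩ closeSet (v * g) a' (y i)) :=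
    fun x ⟨hx, hxq, hxr⟩ i _ ↦ ⟨hx i trivial, hqu' ▸ mem_closeSet_of_mem_goodSet hxq i,
      hrv' ▸ mem_closeSet_of_mem_goodSet hxr i⟩
  refine ENNReal.toReal_le_of_le_ofReal (by positivity) ?_
  rw [Measure.restrict_apply' measurableSet_unitCube, Set.inter_comm, scaled_min]
  refine (measure_mono subset).trans ?_
  rw [volume_pi_pi, ENNReal.ofReal_pow (by positivity)]
  refine Finset.prod_le_pow_card _ _ _ fun i _ ↦
    (volume_closeSet_inter_closeSet_le hg hu hv huv ha ha₂ ha' (y i)).trans ?_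
  refine ENNReal.ofReal_le_ofReal ?_
  linarith [le_max_left (a * a') (min (a / u) (a' / v)),
    le_max_right (a * a') (min (a / u) (a' / v))]

/-- A common point of the two sets makes `y` close to a rational vector of denominator `v - u`,
and the model turns this into `u * (b * s + c) = v * (b * p + c)`. -/
lemma disjoint_goodSet_of_coprime {Q ε : ℝ} {g u v : ℕ} (hmodel : IsRationalModel y Q ε b c)
    (hv : 0 < v) (huv : u.Coprime v) (hne : u ≠ v) (huQ : u ≤ Q) (hvQ : v ≤ Q)
    (hε : v * a + u * a' ≤ ε) : Disjoint (goodSet (u * g) a y b c) (goodSet (v * g) a' y b c) := by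
  rw [Set.disjoint_left]
  rintro x ⟨p, hp, hp'⟩ ⟨s, hs, hs'⟩
  have hv' : (0 : ℝ) < v := by exact_mod_cast hv
  push_cast at hp hs hp' hs'
  have cross (i : ι) : (v : ℤ) * (b * p i + c i) = u * (b * s i + c i) := by
    have := hmodel.mul_eq_mul (v - u) (fun i ↦ u * s i - v * p i)
      (sub_ne_zero.2 (by exact_mod_cast hne.symm))
      (by push_cast; rw [abs_le]; constructor <;> linarith [u.cast_nonneg (α := ℝ)])
      (fun i ↦ ?_) i
    · linear_combination this
    · rw [abs_sub_comm]
      push_cast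
      exact (abs_cross_sub_lt u.cast_nonneg hv' (hp i) (hs i)).trans_le hε
  have coprime : IsCoprime (u : ℤ) v := Nat.isCoprime_iff_coprime.2 huv
  have hu₁ : IsUnit (u : ℤ) := hp' u (dvd_mul_right _ _) fun i ↦
    coprime.dvd_of_dvd_mul_left ⟨_, cross i⟩
  have hv₁ : IsUnit (v : ℤ) := hs' v (dvd_mul_right _ _) fun i ↦
    coprime.symm.dvd_of_dvd_mul_left ⟨_, (cross i).symm⟩
  rw [Int.ofNat_isUnit, Nat.isUnit_iff] at hu₁ hv₁
  exact hne (hu₁.trans hv₁.symm)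

lemma disjoint_goodSet {Q ε : ℝ} (hmodel : IsRationalModel y Q ε b c) (hq : 0 < q) (hr : 0 < r)
    (hqr : q ≠ r) (ha : 0 ≤ a) (ha' : 0 ≤ a') (hQε : Q * (a + a') ≤ ε)
    (hgcd : (q * r : ℝ) ≤ Q * q.gcd r ^ 2) :
    Disjoint (goodSet q a y b c) (goodSet r a' y b c) := by
  set g := q.gcd r
  have : 0 < g := Nat.gcd_pos_of_pos_left r hq
  obtain ⟨u, v, huv, hqu, hrv⟩ : ∃ u v : ℕ, u.Coprime v ∧ q = u * g ∧ r = v * g :=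
    Nat.exists_coprime q r
  have hu : 0 < u := Nat.pos_of_mul_pos_right (hqu ▸ hq)
  have hv : 0 < v := Nat.pos_of_mul_pos_right (hrv ▸ hr)
  have hu' : (1 : ℝ) ≤ u := by exact_mod_cast hu
  have hv' : (1 : ℝ) ≤ v := by exact_mod_cast hv
  have huvQ : (u * v : ℝ) ≤ Q := by
    refine le_of_mul_le_mul_right ?_ (by positivity : (0 : ℝ) < g ^ 2)
    calc (u * v * g ^ 2 : ℝ) = (u * g : ℕ) * (v * g : ℕ) := by push_cast; ring
      _ = q * r := by rw [← hqu, ← hrv]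
      _ ≤ Q * g ^ 2 := hgcd
  have huQ : (u : ℝ) ≤ Q := (le_mul_of_one_le_right (by positivity) hv').trans huvQ
  have hvQ : (v : ℝ) ≤ Q := (le_mul_of_one_le_left (by positivity) hu').trans huvQ
  rw [hqu, hrv]
  refine disjoint_goodSet_of_coprime hmodel hv huv (fun h ↦ hqr (by rw [hqu, hrv, h])) huQ hvQ ?_
  calc v * a + u * a' ≤ Q * a + Q * a' := by gcongr
    _ ≤ ε := by rwa [← mul_add]

end GoodSet

/-! ### Counting primitive numerators -/

lemma sum_one_div_sq_le {S : Finset ℕ} (hS : ∀ n ∈ S, 2 ≤ n) :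
    ∑ n ∈ S, 1 / (n : ℝ) ^ 2 ≤ 3 / 4 := by
  set N := S.sup id + 2
  have subset : S ⊆ insert 2 (Finset.Ioc 2 N) := fun n hn ↦ by
    have : n ≤ S.sup id := Finset.le_sup (f := id) hn
    have := hS n hn
    simp only [Finset.mem_insert, Finset.mem_Ioc]
    omega
  calc ∑ n ∈ S, 1 / (n : ℝ) ^ 2 ≤ ∑ n ∈ insert 2 (Finset.Ioc 2 N), 1 / (n : ℝ) ^ 2 :=
        Finset.sum_le_sum_of_subset_of_nonneg subset fun _ _ _ ↦ by positivity
    _ = 1 / 2 ^ 2 + ∑ n ∈ Finset.Ioc 2 N, ((n : ℝ) ^ 2)⁻¹ := by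
        rw [Finset.sum_insert (by simp)]; simp only [one_div, Nat.cast_ofNat]
    _ ≤ 1 / 2 ^ 2 + (((2 : ℕ) : ℝ)⁻¹ - (N : ℝ)⁻¹) := by
        gcongr; exact sum_Ioc_inv_sq_le_sub two_ne_zero (Nat.le_add_left 2 _)
    _ ≤ 3 / 4 := by
        have : 0 ≤ (N : ℝ)⁻¹ := by positivity
        norm_num
        linarith

lemma add_one_pow_le {x : ℝ} (hx : 0 ≤ x) (n : ℕ) :
    (x + 1) ^ n ≤ x ^ n + n * (x + 1) ^ (n - 1) := by
  obtain _ | n := n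
  · simp
  have bernoulli := one_add_mul_sub_le_pow (a := x / (x + 1))
    (by linarith [div_nonneg hx (by linarith : 0 ≤ x + 1)]) (n + 1)
  calc (x + 1) ^ (n + 1)
      = (x + 1) ^ (n + 1) * (1 + (n + 1 : ℕ) * (x / (x + 1) - 1))
        + (n + 1 : ℕ) * (x + 1) ^ n := by field_simp; ring
    _ ≤ (x + 1) ^ (n + 1) * (x / (x + 1)) ^ (n + 1) + (n + 1 : ℕ) * (x + 1) ^ n := by gcongr
    _ = x ^ (n + 1) + (n + 1 : ℕ) * (x + 1) ^ n := by
        rw [div_pow, mul_div_cancel₀ _ (by positivity)]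

lemma sub_one_le_card_Icc_ceil_floor (t L : ℝ) :
    L - 1 ≤ (Finset.Icc ⌈t⌉ ⌊t + L⌋).card := by
  have card_ge : (⌊t + L⌋ + 1 - ⌈t⌉ : ℝ) ≤ (Finset.Icc ⌈t⌉ ⌊t + L⌋).card := by
    rw [Int.card_Icc]; exact_mod_cast Int.self_le_toNat _
  linarith [Int.lt_floor_add_one (t + L), Int.ceil_lt_add_one t]

lemma exists_mem_divisors_erase_one_dvd {ι : Type*} {q : ℕ} (hq : q ≠ 0) {v : ι → ℤ}
    (h : ¬IsPrimitive q v) : ∃ n ∈ q.divisors.erase 1, ∀ i, (n : ℤ) ∣ v i := by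
  simp only [IsPrimitive, not_forall] at h
  obtain ⟨d, hdq, hdv, hd⟩ := h
  refine ⟨d.natAbs, Finset.mem_erase.2 ⟨fun h ↦ hd (Int.isUnit_iff_natAbs_eq.2 h), ?_⟩,
    fun i ↦ Int.natAbs_dvd.2 (hdv i)⟩
  exact Nat.mem_divisors.2 ⟨Int.natCast_dvd_natCast.1 (Int.natAbs_dvd.2 hdq), hq⟩

section IntegerBox

variable {ι : Type*} [Fintype ι] [DecidableEq ι] {t : ι → ℝ} {L : ℝ} {b : ℤ} {c : ι → ℤ}

/-- The integer points of the closed cube of side length `L` with lowest corner `t`. -/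
noncomputable def integerBox (t : ι → ℝ) (L : ℝ) : Finset (ι → ℤ) :=
  Fintype.piFinset fun i ↦ Finset.Icc ⌈t i⌉ ⌊t i + L⌋

lemma pow_le_card_integerBox (t : ι → ℝ) (hL : 1 ≤ L) :
    (L - 1) ^ Fintype.card ι ≤ (integerBox t L).card := by
  rw [integerBox, Fintype.card_piFinset, Nat.cast_prod]
  calc (L - 1) ^ Fintype.card ι = ∏ _i : ι, (L - 1) := by rw [Finset.prod_const, Finset.card_univ]
    _ ≤ ∏ i, ((Finset.Icc ⌈t i⌉ ⌊t i + L⌋).card : ℝ) :=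
        Finset.prod_le_prod (fun _ _ ↦ by linarith) fun i _ ↦ sub_one_le_card_Icc_ceil_floor ..

open Classical in
lemma card_integerBox_dvd_le (hbc : IsPrimitive b c) (hL : 0 ≤ L) {n : ℕ} (hn : 0 < n) :
    (((integerBox t L).filter fun p ↦ ∀ i, (n : ℤ) ∣ b * p i + c i).card : ℝ) ≤
      (L / n + 1) ^ Fintype.card ι := by
  obtain hempty | ⟨p, hp⟩ :=
    ((integerBox t L).filter fun p ↦ ∀ i, (n : ℤ) ∣ b * p i + c i).eq_empty_or_nonempty
  · rw [hempty, Finset.card_empty, Nat.cast_zero]; positivity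
  have coprime : IsCoprime (n : ℤ) b := hbc.isCoprime_of_forall_dvd (Finset.mem_filter.1 hp).2
  let fibre (i : ι) := (Finset.Icc ⌈t i⌉ ⌊t i + L⌋).filter fun m : ℤ ↦ (n : ℤ) ∣ b * m + c i
  have subset : ((integerBox t L).filter fun p ↦ ∀ i, (n : ℤ) ∣ b * p i + c i) ⊆
      Fintype.piFinset fibre := fun p hp ↦ by
    obtain ⟨hpbox, hpdvd⟩ := Finset.mem_filter.1 hp
    exact Fintype.mem_piFinset.2 fun i ↦
      Finset.mem_filter.2 ⟨Fintype.mem_piFinset.1 hpbox i, hpdvd i⟩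
  have card_fibre (i : ι) : ((fibre i).card : ℝ) ≤ L / n + 1 := by
    refine card_le_div_add_one_of_dvd_sub hn hL (fun s hs s' hs' ↦ ?_) fun s hs s' hs' ↦ ?_
    · have upper := (Finset.mem_Icc.1 (Finset.mem_filter.1 hs).1).2
      have lower := (Finset.mem_Icc.1 (Finset.mem_filter.1 hs').1).1
      linarith [Int.le_floor.1 upper, Int.ceil_le.1 lower]
    · refine coprime.dvd_of_dvd_mul_left ?_
      have := dvd_sub (Finset.mem_filter.1 hs).2 (Finset.mem_filter.1 hs').2
      rwa [add_sub_add_right_eq_sub, ← mul_sub] at this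
  calc (((integerBox t L).filter fun p ↦ ∀ i, (n : ℤ) ∣ b * p i + c i).card : ℝ)
      ≤ (Fintype.piFinset fibre).card := by exact_mod_cast Finset.card_le_card subset
    _ = ∏ i, ((fibre i).card : ℝ) := by rw [Fintype.card_piFinset, Nat.cast_prod]
    _ ≤ (L / n + 1) ^ Fintype.card ι :=
        (Finset.prod_le_prod (fun _ _ ↦ Nat.cast_nonneg _) fun i _ ↦ card_fibre i).trans_eq <| by
          rw [Finset.prod_const, Finset.card_univ]

open Classical in
lemma card_integerBox_not_isPrimitive_le (hbc : IsPrimitive b c) (hL : 0 ≤ L) {q : ℕ}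
    (hq : q ≠ 0) :
    (((integerBox t L).filter fun p ↦ ¬IsPrimitive q fun i ↦ b * p i + c i).card : ℝ) ≤
      ∑ n ∈ q.divisors.erase 1, (L / n + 1) ^ Fintype.card ι := by
  have cover : ((integerBox t L).filter fun p ↦ ¬IsPrimitive q fun i ↦ b * p i + c i) ⊆
      (q.divisors.erase 1).biUnion fun n ↦
        (integerBox t L).filter fun p ↦ ∀ i, (n : ℤ) ∣ b * p i + c i := fun p hp ↦ by
    obtain ⟨hpbox, hprim⟩ := Finset.mem_filter.1 hp
    obtain ⟨n, hn, hdvd⟩ := exists_mem_divisors_erase_one_dvd hq hprim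
    exact Finset.mem_biUnion.2 ⟨n, hn, Finset.mem_filter.2 ⟨hpbox, hdvd⟩⟩
  calc (((integerBox t L).filter fun p ↦ ¬IsPrimitive q fun i ↦ b * p i + c i).card : ℝ)
      ≤ ∑ n ∈ q.divisors.erase 1,
        (((integerBox t L).filter fun p ↦ ∀ i, (n : ℤ) ∣ b * p i + c i).card : ℝ) := by
        exact_mod_cast (Finset.card_le_card cover).trans Finset.card_biUnion_le
    _ ≤ ∑ n ∈ q.divisors.erase 1, (L / n + 1) ^ Fintype.card ι :=
        Finset.sum_le_sum fun n hn ↦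
          card_integerBox_dvd_le hbc hL (Nat.pos_of_mem_divisors (Finset.mem_of_mem_erase hn))

end IntegerBox

lemma sum_divisors_erase_one_pow_le {L : ℝ} (hL : 0 ≤ L) {d : ℕ} (hd : 2 ≤ d) (q : ℕ) :
    ∑ n ∈ q.divisors.erase 1, (L / n + 1) ^ d ≤
      3 / 4 * L ^ d + q.divisors.card * (d * (L + 1) ^ (d - 1)) := by
  have two_le {n : ℕ} (hn : n ∈ q.divisors.erase 1) : 2 ≤ n := by
    have := Nat.pos_of_mem_divisors (Finset.mem_of_mem_erase hn)
    have := Finset.ne_of_mem_erase hn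
    omega
  have term {n : ℕ} (hn : n ∈ q.divisors.erase 1) :
      (L / n + 1) ^ d ≤ L ^ d * (1 / (n : ℝ) ^ 2) + d * (L + 1) ^ (d - 1) := by
    have hn1 : (1 : ℝ) ≤ n := by exact_mod_cast one_le_two.trans (two_le hn)
    calc (L / n + 1) ^ d ≤ (L / n) ^ d + d * (L / n + 1) ^ (d - 1) :=
          add_one_pow_le (by positivity) d
      _ ≤ L ^ d * (1 / (n : ℝ) ^ 2) + d * (L + 1) ^ (d - 1) := by
          rw [div_pow, div_eq_mul_one_div]
          gcongr
          exact div_le_self hL hn1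
  calc ∑ n ∈ q.divisors.erase 1, (L / n + 1) ^ d
      ≤ ∑ n ∈ q.divisors.erase 1, (L ^ d * (1 / (n : ℝ) ^ 2) + d * (L + 1) ^ (d - 1)) :=
        Finset.sum_le_sum fun n hn ↦ term hn
    _ = L ^ d * ∑ n ∈ q.divisors.erase 1, 1 / (n : ℝ) ^ 2
        + (q.divisors.erase 1).card * (d * (L + 1) ^ (d - 1)) := by
        rw [Finset.sum_add_distrib, Finset.mul_sum, Finset.sum_const, nsmul_eq_mul]
    _ ≤ L ^ d * (3 / 4) + q.divisors.card * (d * (L + 1) ^ (d - 1)) := by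
        gcongr
        · exact sum_one_div_sq_le fun n hn ↦ two_le hn
        · exact Finset.erase_subset 1 _
    _ = 3 / 4 * L ^ d + q.divisors.card * (d * (L + 1) ^ (d - 1)) := by ring

open Classical in
lemma pow_div_le_card_integerBox_isPrimitive {ι : Type*} [Fintype ι] {L : ℝ} {b : ℤ}
    {c : ι → ℤ} (hι : 2 ≤ Fintype.card ι) (hbc : IsPrimitive b c) (hL : 1 ≤ L) {q : ℕ}
    (hq : q ≠ 0)
    (hqL : q.divisors.card * (Fintype.card ι * 2 ^ Fintype.card ι) ≤ L / 8) (t : ι → ℝ) :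
    L ^ Fintype.card ι / 8 ≤
      ((integerBox t L).filter fun p ↦ IsPrimitive q fun i ↦ b * p i + c i).card := by
  set d := Fintype.card ι
  set τ := (q.divisors.card : ℝ)
  have hτ : 1 ≤ τ := Nat.one_le_cast.2 (Nat.nonempty_divisors.2 hq).card_pos
  have total : L ^ d - d * L ^ (d - 1) ≤ (integerBox t L).card := by
    have := add_one_pow_le (sub_nonneg.2 hL) d
    rw [sub_add_cancel] at this
    linarith [pow_le_card_integerBox t hL]
  have split : (((integerBox t L).filter fun p ↦ IsPrimitive q fun i ↦ b * p i + c i).card : ℝ) +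
      ((integerBox t L).filter fun p ↦ ¬IsPrimitive q fun i ↦ b * p i + c i).card =
      (integerBox t L).card := by exact_mod_cast Finset.card_filter_add_card_filter_not _
  have nonprimitive := (card_integerBox_not_isPrimitive_le (t := t) hbc (by linarith) hq).trans
    (sum_divisors_erase_one_pow_le (L := L) (by linarith) hι q)
  have error : d * L ^ (d - 1) + τ * (d * (L + 1) ^ (d - 1)) ≤ L ^ d / 8 :=
    calc d * L ^ (d - 1) + τ * (d * (L + 1) ^ (d - 1))
        ≤ τ * (d * (2 * L) ^ (d - 1)) + τ * (d * (2 * L) ^ (d - 1)) := by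
          gcongr ?_ + ?_
          · refine (le_mul_of_one_le_left (by positivity) hτ).trans ?_
            gcongr
            linarith
          · gcongr
            linarith
      _ = τ * (d * 2 ^ d) * L ^ (d - 1) := by
          rw [mul_pow, ← mul_pow_sub_one (by omega : d ≠ 0) (2 : ℝ)]; ring
      _ ≤ L / 8 * L ^ (d - 1) := by gcongr
      _ = L ^ d / 8 := by rw [← mul_pow_sub_one (by omega : d ≠ 0) L]; ring
  linarith

section LocalDensity

variable {ι : Type*} [Fintype ι] {q : ℕ} {a ρ : ℝ} {y z : ι → ℝ} {b : ℤ} {c p p' : ι → ℤ}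

lemma ball_subset_goodSet (hq : 0 < q) (hp : IsPrimitive q fun i ↦ b * p i + c i) :
    Metric.ball (fun i ↦ (p i + y i) / q) (a / q) ⊆ goodSet q a y b c := by
  refine fun x hx ↦ ⟨p, fun i ↦ ?_, hp⟩
  have hq' : (0 : ℝ) < q := by exact_mod_cast hq
  have near : |x i - (p i + y i) / q| < a / q :=
    (dist_le_pi_dist x _ i).trans_lt (Metric.mem_ball.1 hx)
  calc |q * x i - p i - y i| = q * |x i - (p i + y i) / q| := by
        rw [← abs_of_pos hq', ← abs_mul, abs_of_pos hq', mul_sub, mul_div_cancel₀ _ hq'.ne',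
          sub_sub]
    _ < a := by rwa [← lt_div_iff₀' hq']

lemma disjoint_ball_of_ne (ha : a ≤ 1 / 2) (hp : p ≠ p') :
    Disjoint (Metric.ball (fun i ↦ (p i + y i) / (q : ℝ)) (a / q))
      (Metric.ball (fun i ↦ (p' i + y i) / (q : ℝ)) (a / q)) := by
  obtain ⟨i, hi⟩ := Function.ne_iff.1 hp
  refine Metric.ball_disjoint_ball ((?_ : a / q + a / q ≤ 1 / q).trans
    (le_trans ?_ (dist_le_pi_dist _ _ i)))
  · rw [← add_div]; gcongr; linarith
  · have : (1 : ℝ) ≤ |(p i - p' i : ℝ)| := by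
      exact_mod_cast Int.one_le_abs (sub_ne_zero.2 hi)
    rw [Real.dist_eq, ← sub_div, add_sub_add_right_eq_sub, abs_div, Nat.abs_cast]
    gcongr

lemma ball_subset_closedBall_of_mem_integerBox [DecidableEq ι] (hq : 0 < q) (ha : a ≤ 1 / 2)
    (hρ : 0 ≤ ρ) (hqρ : 1 ≤ q * ρ)
    (hp : p ∈ integerBox (fun i ↦ q * (z i - ρ / 2) - y i) (q * ρ)) :
    Metric.ball (fun i ↦ (p i + y i) / q) (a / q) ⊆ Metric.closedBall z ρ := by
  have hq' : (0 : ℝ) < q := by exact_mod_cast hq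
  have center : dist (fun i ↦ (p i + y i) / (q : ℝ)) z ≤ ρ / 2 := by
    refine (dist_pi_le_iff (by positivity)).2 fun i ↦ ?_
    have hpi := Finset.mem_Icc.1 (Fintype.mem_piFinset.1 hp i)
    have lower := Int.ceil_le.1 hpi.1
    have upper := Int.le_floor.1 hpi.2
    rw [Real.dist_eq, div_sub' hq'.ne', abs_div, Nat.abs_cast, div_le_iff₀ hq', abs_le]
    constructor <;> linarith
  have radius : a / q ≤ ρ / 2 := by
    rw [div_le_iff₀ hq']
    linarith
  exact Metric.ball_subset_closedBall.trans
    (Metric.closedBall_subset_closedBall' (by linarith))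

lemma measureReal_closedBall_mul_pow_le_measureReal_goodSet_inter (hι : 2 ≤ Fintype.card ι)
    (hq : 0 < q) (ha : 0 ≤ a) (ha' : a ≤ 1 / 2) (hbc : IsPrimitive b c) (hρ : 0 ≤ ρ)
    (hqρ : 1 ≤ q * ρ)
    (hdiv : q.divisors.card * (Fintype.card ι * 2 ^ Fintype.card ι : ℝ) ≤ q * ρ / 8) :
    1 / 8 * volume.real (Metric.closedBall z ρ) * a ^ Fintype.card ι ≤
      volume.real (goodSet q a y b c ∩ Metric.closedBall z ρ) := by
  classical
  have : Nonempty ι := Fintype.card_pos_iff.1 (by omega)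
  obtain rfl | ha := ha.eq_or_lt
  · rw [zero_pow (by omega), mul_zero]; exact measureReal_nonneg
  have : (0 : ℝ) < q := by exact_mod_cast hq
  set P := (integerBox (fun i ↦ q * (z i - ρ / 2) - y i) (q * ρ)).filter
    fun p ↦ IsPrimitive q fun i ↦ b * p i + c i
  let B (p : ι → ℤ) := Metric.ball (fun i ↦ (p i + y i) / (q : ℝ)) (a / q)
  have volume_B (p : ι → ℤ) : volume.real (B p) = (2 * (a / q)) ^ Fintype.card ι := by
    rw [measureReal_def, Real.volume_pi_ball _ (by positivity),
      ENNReal.toReal_ofReal (by positivity)]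
  have disjoint : (P : Set (ι → ℤ)).PairwiseDisjoint B := fun p _ p' _ hne ↦
    disjoint_ball_of_ne ha' hne
  have card_P : (q * ρ) ^ Fintype.card ι / 8 ≤ P.card :=
    pow_div_le_card_integerBox_isPrimitive hι hbc hqρ hq.ne' hdiv _
  calc 1 / 8 * volume.real (Metric.closedBall z ρ) * a ^ Fintype.card ι
      = (q * ρ) ^ Fintype.card ι / 8 * (2 * (a / q)) ^ Fintype.card ι := by
        rw [measureReal_def, Real.volume_pi_closedBall _ hρ, ENNReal.toReal_ofReal (by positivity),
          one_div_mul_eq_div, div_mul_eq_mul_div, div_mul_eq_mul_div, ← mul_pow, ← mul_pow]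
        congr 2
        field_simp
    _ ≤ P.card * (2 * (a / q)) ^ Fintype.card ι := by gcongr
    _ = volume.real (⋃ p ∈ P, B p) := by
        rw [measureReal_biUnion_finset disjoint (fun p _ ↦ measurableSet_ball)
          (fun p _ ↦ measure_ball_lt_top.ne)]
        simp only [volume_B, Finset.sum_const, nsmul_eq_mul]
    _ ≤ volume.real (goodSet q a y b c ∩ Metric.closedBall z ρ) := by
        refine measureReal_mono (Set.iUnion₂_subset fun p hp ↦ ?_)
          (measure_ne_top_of_subset Set.inter_subset_right measure_closedBall_lt_top.ne)
        obtain ⟨hbox, hprim⟩ := Finset.mem_filter.1 hp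
        exact Set.subset_inter (ball_subset_goodSet hq hprim)
          (ball_subset_closedBall_of_mem_integerBox hq ha' hρ hqρ hbox)

lemma eventually_measureReal_closedBall_mul_pow_le (hι : 2 ≤ Fintype.card ι) (hρ : 0 < ρ) :
    ∀ᶠ q : ℕ in atTop, ∀ (y z : ι → ℝ) (a : ℝ) (b : ℤ) (c : ι → ℤ), 0 ≤ a → a ≤ 1 / 2 →
      IsPrimitive b c → 1 / 8 * volume.real (Metric.closedBall z ρ) * a ^ Fintype.card ι ≤
        volume.real (goodSet q a y b c ∩ Metric.closedBall z ρ) := by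
  set K : ℝ := Fintype.card ι * 2 ^ Fintype.card ι
  have hK : 0 < K := by positivity
  have divisors := isLittleO_card_divisors.bound (show 0 < ρ / (8 * K) by positivity)
  have large := (tendsto_natCast_atTop_atTop.atTop_mul_const hρ).eventually_ge_atTop (1 : ℝ)
  filter_upwards [divisors, large, eventually_gt_atTop 0] with q hdiv hqρ hq y z a b c ha ha' hbc
  refine measureReal_closedBall_mul_pow_le_measureReal_goodSet_inter hι hq ha ha' hbc hρ.le hqρ ?_
  rw [Real.norm_natCast, Real.norm_natCast] at hdiv
  calc (q.divisors.card : ℝ) * K ≤ ρ / (8 * K) * q * K := by gcongr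
    _ = q * ρ / 8 := by field_simp

end LocalDensity

/-! ### Overlaps of good sets -/

lemma mul_pow_le_rpow_mul_rpow {x α β : ℝ} (hx : 0 ≤ x) (hα : 0 < α) (hαβ : α ≤ β) (hβ : β ≤ 1)
    {d : ℕ} (hd : 2 ≤ d) :
    (x * α) ^ d ≤ (α * β) ^ (1 / 4 : ℝ) * (x ^ d * β ^ (5 / 4 : ℝ)) := by
  have hβ₀ : 0 < β := hα.trans_le hαβ
  calc (x * α) ^ d ≤ x ^ d * α ^ 2 := by
        rw [mul_pow]
        gcongr ?_ * ?_
        exact pow_le_pow_of_le_one hα.le (hαβ.trans hβ) hd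
    _ = x ^ d * (α ^ (1 / 4 : ℝ) * α ^ (7 / 4 : ℝ)) := by
        rw [← Real.rpow_add hα, ← Real.rpow_natCast]; norm_num
    _ ≤ x ^ d * (α ^ (1 / 4 : ℝ) * β ^ (3 / 2 : ℝ)) := by
        gcongr
        calc α ^ (7 / 4 : ℝ) ≤ β ^ (7 / 4 : ℝ) := by gcongr
          _ ≤ β ^ (3 / 2 : ℝ) := Real.rpow_le_rpow_of_exponent_ge hβ₀ hβ (by norm_num)
    _ = (α * β) ^ (1 / 4 : ℝ) * (x ^ d * β ^ (5 / 4 : ℝ)) := by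
        rw [Real.mul_rpow hα.le hβ₀.le,
          show (3 / 2 : ℝ) = 1 / 4 + 5 / 4 by norm_num, Real.rpow_add hβ₀]
        ring

lemma min_mul_mul_pow_le {x y α β : ℝ} (hx : 0 ≤ x) (hy : 0 ≤ y) (hα : 0 < α) (hα' : α ≤ 1)
    (hβ : 0 < β) (hβ' : β ≤ 1) {d : ℕ} (hd : 2 ≤ d) :
    min (x * α) (y * β) ^ d ≤
      (α * β) ^ (1 / 4 : ℝ) * (x ^ d * β ^ (5 / 4 : ℝ) + y ^ d * α ^ (5 / 4 : ℝ)) := by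
  have hmin : 0 ≤ min (x * α) (y * β) := by positivity
  rw [mul_add]
  obtain h | h := le_total α β
  · refine le_add_of_le_of_nonneg ?_ (by positivity)
    exact (pow_le_pow_left₀ hmin (min_le_left _ _) d).trans
      (mul_pow_le_rpow_mul_rpow hx hα h hβ' hd)
  · refine le_add_of_nonneg_of_le (by positivity) ?_
    rw [mul_comm α]
    exact (pow_le_pow_left₀ hmin (min_le_right _ _) d).trans
      (mul_pow_le_rpow_mul_rpow hy hβ h hα' hd)

section Overlap

variable {ι : Type*} [Fintype ι] {q r : ℕ} {a a' : ℝ} {y : ι → ℝ} {b b' : ℤ} {c c' : ι → ℤ}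

lemma measureReal_goodSet_le (hq : 0 < q) (ha : 0 ≤ a) (ha₂ : a ≤ 1 / 2) :
    (volume.restrict (unitCube ι)).real (goodSet q a y b c) ≤ (30 * a) ^ Fintype.card ι := by
  have hq' : (0 : ℝ) < q := by exact_mod_cast hq
  have := measureReal_goodSet_inter_goodSet_le (y := y) (b := b) (b' := b) (c := c) (c' := c)
    hq hq ha ha₂ ha
  rwa [Set.inter_self, Nat.gcd_self, min_self, mul_div_cancel₀ _ hq'.ne',
    max_eq_right (mul_le_of_le_one_left ha (by linarith))] at this

lemma measureReal_goodSet_inter_goodSet_le_of_sq_le (hq : 0 < q) (hqr : q ^ 2 ≤ r)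
    (ha : 1 / q ≤ a) (ha₂ : a ≤ 1 / 2) (ha' : 0 ≤ a') :
    (volume.restrict (unitCube ι)).real (goodSet q a y b c ∩ goodSet r a' y b' c') ≤
      (30 * (a * a')) ^ Fintype.card ι := by
  have : (0 : ℝ) < q := by exact_mod_cast hq
  have ha₀ : 0 ≤ a := (by positivity : (0 : ℝ) ≤ 1 / q).trans ha
  refine (measureReal_goodSet_inter_goodSet_le hq (by nlinarith) ha₀ ha₂ ha').trans_eq ?_
  rw [max_eq_left]
  calc q.gcd r * min (a / q) (a' / r) ≤ q * (a' / (q : ℝ) ^ 2) := by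
        gcongr
        · exact_mod_cast Nat.gcd_le_left r hq
        · refine (min_le_right _ _).trans ?_
          gcongr
          exact_mod_cast hqr
    _ = 1 / q * a' := by field_simp
    _ ≤ a * a' := by gcongr

lemma measureReal_goodSet_inter_goodSet_le_of_isRationalModel {Q ε : ℝ}
    (hι : 2 ≤ Fintype.card ι) (hmodel : IsRationalModel y Q ε b c) (hQ : 0 < Q) (hq : 0 < q)
    (hr : 0 < r) (hqr : q ≠ r) (ha : 0 ≤ a) (ha₂ : a ≤ 1 / 2) (ha' : 0 ≤ a')
    (hQε : Q * (a + a') ≤ ε) :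
    (volume.restrict (unitCube ι)).real (goodSet q a y b c ∩ goodSet r a' y b c) ≤
      30 ^ Fintype.card ι * (a ^ Fintype.card ι * a' ^ Fintype.card ι + Q ^ (-(1 / 4) : ℝ) *
        (a ^ Fintype.card ι * ((q.gcd r : ℝ) / r) ^ (5 / 4 : ℝ) +
          a' ^ Fintype.card ι * ((q.gcd r : ℝ) / q) ^ (5 / 4 : ℝ))) := by
  obtain hgcd | hgcd := le_or_gt (q * r : ℝ) (Q * q.gcd r ^ 2)
  · rw [(disjoint_goodSet hmodel hq hr hqr ha ha' hQε hgcd).inter_eq, measureReal_empty]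
    positivity
  set d := Fintype.card ι
  set g := q.gcd r
  have : 0 < g := Nat.gcd_pos_of_pos_left r hq
  have hgq : (g / q : ℝ) ≤ 1 := div_le_one_of_le₀ (by exact_mod_cast Nat.gcd_le_left r hq) (by simp)
  have hgr : (g / r : ℝ) ≤ 1 :=
    div_le_one_of_le₀ (by exact_mod_cast Nat.gcd_le_right q hr) (by simp)
  have small : (g / q * (g / r) : ℝ) ^ (1 / 4 : ℝ) ≤ Q ^ (-(1 / 4) : ℝ) := by
    rw [Real.rpow_neg hQ.le, ← Real.inv_rpow hQ.le]
    gcongr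
    rw [div_mul_div_comm, ← sq, inv_eq_one_div, div_le_div_iff₀ (by positivity) hQ]
    linarith
  refine (measureReal_goodSet_inter_goodSet_le hq hr ha ha₂ ha').trans ?_
  rw [mul_pow]
  gcongr
  calc max (a * a') (g * min (a / q) (a' / r)) ^ d
      ≤ (a * a') ^ d + min (a * (g / q)) (a' * (g / r)) ^ d := by
        have : g * min (a / q) (a' / r) = min (a * (g / q)) (a' * (g / r)) := by
          rw [mul_min_of_nonneg _ _ g.cast_nonneg, mul_div_left_comm, mul_div_left_comm _ a']
        rw [this]
        rcases max_choice (a * a') (min (a * (g / q)) (a' * (g / r))) with h | h <;> rw [h]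
        · exact le_add_of_nonneg_right (by positivity)
        · exact le_add_of_nonneg_left (by positivity)
    _ ≤ a ^ d * a' ^ d + (g / q * (g / r) : ℝ) ^ (1 / 4 : ℝ) *
        (a ^ d * (g / r : ℝ) ^ (5 / 4 : ℝ) + a' ^ d * (g / q : ℝ) ^ (5 / 4 : ℝ)) := by
        rw [mul_pow a]
        gcongr
        exact min_mul_mul_pow_le ha ha' (by positivity) hgq (by positivity) hgr hι
    _ ≤ _ := by gcongr

end Overlap

/-! ### Doubly exponential blocks -/

/-- The index `k` with `2 ^ 2 ^ k ≤ q < 2 ^ 2 ^ (k + 1)`, for `2 ≤ q`. One rational model serves a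
whole block, since its elements are polynomially comparable, while elements `q < r` of distinct
blocks of equal parity satisfy `q ^ 2 ≤ r`. -/
def block (q : ℕ) : ℕ := Nat.log 2 (Nat.log 2 q)

/-- The least element `2 ^ 2 ^ k` of the `k`-th block. -/
def blockStart (k : ℕ) : ℕ := 2 ^ 2 ^ k

lemma blockStart_pos (k : ℕ) : 0 < blockStart k := by unfold blockStart; positivity

lemma blockStart_mono : Monotone blockStart := fun k l hkl ↦ by
  unfold blockStart; gcongr <;> exact one_le_two

lemma blockStart_sq (k : ℕ) : blockStart k ^ 2 = blockStart (k + 1) := by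
  rw [blockStart, ← pow_mul, ← pow_succ, blockStart]

lemma blockStart_block_le {q : ℕ} (hq : 2 ≤ q) : blockStart (block q) ≤ q :=
  calc blockStart (block q) ≤ 2 ^ Nat.log 2 q :=
        Nat.pow_le_pow_right two_pos (Nat.pow_log_le_self 2 (Nat.log_pos one_lt_two hq).ne')
    _ ≤ q := Nat.pow_log_le_self 2 (by omega)

lemma le_blockStart_block_sq (q : ℕ) : q ≤ blockStart (block q) ^ 2 := by
  rw [blockStart_sq]
  calc q ≤ 2 ^ (Nat.log 2 q + 1) := (Nat.lt_pow_succ_log_self one_lt_two q).le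
    _ ≤ blockStart (block q + 1) :=
        Nat.pow_le_pow_right two_pos (Nat.lt_pow_succ_log_self one_lt_two _)

lemma sq_le_of_block_add_two_le {q r : ℕ} (hr : 2 ≤ r) (h : block q + 2 ≤ block r) : q ^ 2 ≤ r :=
  calc q ^ 2 ≤ (blockStart (block q) ^ 2) ^ 2 := by gcongr; exact le_blockStart_block_sq q
    _ = blockStart (block q + 2) := by rw [blockStart_sq, blockStart_sq]
    _ ≤ blockStart (block r) := blockStart_mono h
    _ ≤ r := blockStart_block_le hr

lemma rpow_blockStart_div_two_le {κ : ℝ} (hκ : 0 ≤ κ) {q : ℕ} (hq : 0 < q) :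
    ((blockStart (block q) : ℝ) ^ κ / 2) ^ (-(1 / 4) : ℝ) ≤ 2 * (q : ℝ) ^ (-(κ / 8)) := by
  have hqN : (q : ℝ) ≤ (blockStart (block q) : ℝ) ^ 2 := by
    exact_mod_cast le_blockStart_block_sq q
  set N := (blockStart (block q) : ℝ)
  have hN : 0 < N := Nat.cast_pos.2 (blockStart_pos _)
  calc (N ^ κ / 2) ^ (-(1 / 4) : ℝ) = 2 ^ (1 / 4 : ℝ) * (N ^ 2) ^ (-(κ / 8)) := by
        rw [Real.div_rpow (by positivity) zero_le_two, Real.rpow_neg zero_le_two, div_inv_eq_mul,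
          ← Real.rpow_mul hN.le, ← Real.rpow_natCast_mul hN.le, mul_comm]
        congr 2
        push_cast
        ring
    _ ≤ 2 * (q : ℝ) ^ (-(κ / 8)) := by
        gcongr ?_ * ?_
        · exact Real.rpow_le_self_of_one_le one_le_two (by norm_num)
        · exact Real.rpow_le_rpow_of_nonpos (by positivity) hqN (by linarith)

/-- The pair `(b k, c k)` is a rational model of `y` at the scale of the `k`-th block. -/
def IsBlockModel {ι : Type*} (y : ι → ℝ) (κ : ℝ) (b : ℕ → ℤ) (c : ℕ → ι → ℤ) : Prop :=
  ∀ k, IsRationalModel y ((blockStart k : ℝ) ^ κ / 2) ((blockStart k : ℝ) ^ (-(2 * κ))) (b k) (c k)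

lemma exists_isBlockModel {ι : Type*} [Finite ι] [Nonempty ι] (y : ι → ℝ) {κ : ℝ} (hκ : 0 ≤ κ) :
    ∃ b c, IsBlockModel y κ b c := by
  have model (k : ℕ) : ∃ b c, IsRationalModel y ((blockStart k : ℝ) ^ κ / 2)
      ((blockStart k : ℝ) ^ (-(2 * κ))) b c := by
    have hN : (1 : ℝ) ≤ blockStart k := by exact_mod_cast blockStart_pos k
    refine exists_isRationalModel y ?_
    rw [mul_div_cancel₀ _ two_ne_zero, ← Real.rpow_add (by positivity)]
    exact Real.rpow_le_one_of_one_le_of_nonpos hN (by linarith)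
  choose b c hbc using model
  exact ⟨b, c, hbc⟩

/-- The radii to which the overlap estimates apply: polynomially small, at least `1 / q` where they
do not vanish, and supported on blocks of parity `j`. -/
structure IsAdmissible (κ : ℝ) (j : ℕ) (a : ℕ → ℝ) : Prop where
  nonneg : ∀ q, 0 ≤ a q
  le_half : ∀ q, a q ≤ 1 / 2
  le_rpow : ∀ q, a q ≤ (q : ℝ) ^ (-(3 * κ))
  of_ne_zero : ∀ q, a q ≠ 0 → 2 ≤ q ∧ block q % 2 = j ∧ 1 / q ≤ a q

/-- The good set of `q` formed with the rational model of the block of `q`. -/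
def blockGoodSet {ι : Type*} (a : ℕ → ℝ) (y : ι → ℝ) (b : ℕ → ℤ) (c : ℕ → ι → ℤ) (q : ℕ) :
    Set (ι → ℝ) :=
  goodSet q (a q) y (b (block q)) (c (block q))

/-- The deviation from independence of the `q`-th and `r`-th good sets is controlled by
`overlapError κ w q r + overlapError κ w r q`, with `w q` proportional to the measure of the
`q`-th one. -/
noncomputable def overlapError (κ : ℝ) (w : ℕ → ℝ) (q r : ℕ) : ℝ :=
  w q * ((if q = r then 1 else 0) + 2 * (q : ℝ) ^ (-(κ / 8)) * ((q.gcd r : ℝ) / r) ^ (5 / 4 : ℝ))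

lemma overlapError_nonneg {κ : ℝ} {w : ℕ → ℝ} (hw : ∀ q, 0 ≤ w q) (q r : ℕ) :
    0 ≤ overlapError κ w q r := by
  have := hw q
  unfold overlapError
  positivity

lemma le_overlapError_self {κ : ℝ} {w : ℕ → ℝ} (hw : ∀ q, 0 ≤ w q) (q : ℕ) :
    w q ≤ overlapError κ w q q := by
  rw [overlapError, if_pos rfl]
  exact le_mul_of_one_le_right (hw q) (le_add_of_nonneg_right (by positivity))

lemma exists_sum_overlapError_le {κ : ℝ} (hκ : 0 < κ) :
    ∃ K : ℝ, 0 < K ∧ ∀ w : ℕ → ℝ, (∀ q, 0 ≤ w q) → w 0 = 0 → ∀ q T,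
      ∑ r ∈ T, overlapError κ w q r ≤ K * w q := by
  obtain ⟨C, hC, hdiv⟩ := exists_card_divisors_le_mul_rpow (ε := κ / 8) (by positivity)
  set Z := ∑' m : ℕ, (1 / (m : ℝ)) ^ (5 / 4 : ℝ)
  have hZ : 0 ≤ Z := tsum_nonneg fun m ↦ by positivity
  refine ⟨1 + 2 * C * Z, by positivity, fun w hw hw₀ q T ↦ ?_⟩
  obtain rfl | hq := eq_or_ne q 0
  · simp [overlapError, hw₀]
  have hq' : (0 : ℝ) < q := by exact_mod_cast hq.bot_lt
  have gcd_sum : ∑ r ∈ T, ((q.gcd r : ℝ) / r) ^ (5 / 4 : ℝ) ≤ C * (q : ℝ) ^ (κ / 8) * Z :=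
    (sum_gcd_div_rpow_le (by norm_num) hq T).trans (by gcongr; exact hdiv q hq)
  have diagonal : ∑ r ∈ T, (if q = r then (1 : ℝ) else 0) ≤ 1 := by
    rw [Finset.sum_ite_eq]; split_ifs <;> norm_num
  unfold overlapError
  rw [← Finset.mul_sum, Finset.sum_add_distrib, ← Finset.mul_sum, mul_comm]
  gcongr ?_ * _
  · exact hw q
  calc (∑ r ∈ T, if q = r then (1 : ℝ) else 0) +
        2 * (q : ℝ) ^ (-(κ / 8)) * ∑ r ∈ T, ((q.gcd r : ℝ) / r) ^ (5 / 4 : ℝ)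
      ≤ 1 + 2 * (q : ℝ) ^ (-(κ / 8)) * (C * (q : ℝ) ^ (κ / 8) * Z) := by gcongr
    _ = 1 + 2 * C * Z := by
        rw [Real.rpow_neg hq'.le]
        field_simp

section PairEstimate

variable {ι : Type*} [Fintype ι] {κ : ℝ} {j q r : ℕ} {a : ℕ → ℝ} {y : ι → ℝ} {b : ℕ → ℤ}
  {c : ℕ → ι → ℤ}

lemma measureReal_blockGoodSet_inter_le_of_block_lt (ha : IsAdmissible κ j a) (hq : a q ≠ 0)
    (hr : a r ≠ 0) (h : block q < block r) :
    (volume.restrict (unitCube ι)).real (blockGoodSet a y b c q ∩ blockGoodSet a y b c r) ≤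
      (30 * (a q * a r)) ^ Fintype.card ι := by
  obtain ⟨hq₂, hqj, haq⟩ := ha.of_ne_zero q hq
  obtain ⟨hr₂, hrj, -⟩ := ha.of_ne_zero r hr
  exact measureReal_goodSet_inter_goodSet_le_of_sq_le (by omega)
    (sq_le_of_block_add_two_le hr₂ (by omega)) haq (ha.le_half q) (ha.nonneg r)

lemma measureReal_blockGoodSet_inter_le_of_block_eq (hκ : 0 ≤ κ) (hι : 2 ≤ Fintype.card ι)
    (ha : IsAdmissible κ j a) (hbc : IsBlockModel y κ b c) (hq : a q ≠ 0) (hr : a r ≠ 0)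
    (hqr : q ≠ r) (h : block q = block r) :
    (volume.restrict (unitCube ι)).real (blockGoodSet a y b c q ∩ blockGoodSet a y b c r) ≤
      30 ^ Fintype.card ι * (a q ^ Fintype.card ι * a r ^ Fintype.card ι +
        (overlapError κ (a · ^ Fintype.card ι) q r +
          overlapError κ (a · ^ Fintype.card ι) r q)) := by
  obtain ⟨hq₂, -⟩ := ha.of_ne_zero q hq
  obtain ⟨hr₂, -⟩ := ha.of_ne_zero r hr
  set N := (blockStart (block q) : ℝ)
  have hN : 0 < N := Nat.cast_pos.2 (blockStart_pos _)
  have le_rpow {s : ℕ} (hs : 2 ≤ s) (hsq : block s = block q) : a s ≤ N ^ (-(3 * κ)) :=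
    (ha.le_rpow s).trans <| Real.rpow_le_rpow_of_nonpos hN
      (Nat.cast_le.2 (hsq ▸ blockStart_block_le hs)) (by linarith)
  have radius : N ^ κ / 2 * (a q + a r) ≤ N ^ (-(2 * κ)) :=
    calc N ^ κ / 2 * (a q + a r) ≤ N ^ κ / 2 * (N ^ (-(3 * κ)) + N ^ (-(3 * κ))) := by
          gcongr
          exacts [le_rpow hq₂ rfl, le_rpow hr₂ h.symm]
      _ = N ^ κ * N ^ (-(3 * κ)) := by ring
      _ = N ^ (-(2 * κ)) := by rw [← Real.rpow_add hN]; congr 1; ring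
  have bound := measureReal_goodSet_inter_goodSet_le_of_isRationalModel hι (hbc (block q))
    (by positivity) (by omega) (by omega) hqr (ha.nonneg q) (ha.le_half q) (ha.nonneg r) radius
  have haq := ha.nonneg q
  have har := ha.nonneg r
  unfold blockGoodSet overlapError
  rw [← h, if_neg hqr, if_neg hqr.symm, zero_add, zero_add, r.gcd_comm q]
  refine bound.trans ?_
  rw [mul_add (_ ^ (-(1 / 4) : ℝ)), mul_left_comm _ (a q ^ _), mul_left_comm _ (a r ^ _)]
  gcongr
  · exact rpow_blockStart_div_two_le hκ (by omega)
  · exact h ▸ rpow_blockStart_div_two_le hκ (by omega)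

lemma measureReal_blockGoodSet_inter_le (hκ : 0 ≤ κ) (hι : 2 ≤ Fintype.card ι)
    (ha : IsAdmissible κ j a) (hbc : IsBlockModel y κ b c) (q r : ℕ) :
    (volume.restrict (unitCube ι)).real (blockGoodSet a y b c q ∩ blockGoodSet a y b c r) ≤
      30 ^ Fintype.card ι * (a q ^ Fintype.card ι * a r ^ Fintype.card ι +
        (overlapError κ (a · ^ Fintype.card ι) q r +
          overlapError κ (a · ^ Fintype.card ι) r q)) := by
  have : Nonempty ι := Fintype.card_pos_iff.1 (by omega)
  set d := Fintype.card ι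
  have hw (q : ℕ) : 0 ≤ a q ^ d := pow_nonneg (ha.nonneg q) d
  have error_nonneg (q r : ℕ) := overlapError_nonneg (κ := κ) hw q r
  have nonneg : 0 ≤ 30 ^ d * (a q ^ d * a r ^ d +
      (overlapError κ (a · ^ d) q r + overlapError κ (a · ^ d) r q)) := by
    have := mul_nonneg (hw q) (hw r)
    have := error_nonneg q r
    have := error_nonneg r q
    positivity
  obtain hq | hq := eq_or_ne (a q) 0
  · rwa [blockGoodSet, goodSet_eq_empty hq.le, Set.empty_inter, measureReal_empty]
  obtain hr | hr := eq_or_ne (a r) 0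
  · rwa [blockGoodSet, blockGoodSet, goodSet_eq_empty hr.le, Set.inter_empty, measureReal_empty]
  obtain rfl | hqr := eq_or_ne q r
  · rw [Set.inter_self]
    refine (measureReal_goodSet_le (by have := ha.of_ne_zero q hq; omega) (ha.nonneg q)
      (ha.le_half q)).trans ?_
    rw [mul_pow]
    gcongr
    linarith [le_overlapError_self (κ := κ) hw q, error_nonneg q q, mul_nonneg (hw q) (hw q)]
  obtain h | h | h := lt_trichotomy (block q) (block r)
  · refine (measureReal_blockGoodSet_inter_le_of_block_lt ha hq hr h).trans ?_
    rw [mul_pow, mul_pow]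
    gcongr
    linarith [error_nonneg q r, error_nonneg r q]
  · exact measureReal_blockGoodSet_inter_le_of_block_eq hκ hι ha hbc hq hr hqr h
  · rw [Set.inter_comm]
    refine (measureReal_blockGoodSet_inter_le_of_block_lt ha hr hq h).trans ?_
    rw [mul_pow, mul_pow, mul_comm (a r ^ d)]
    gcongr
    linarith [error_nonneg q r, error_nonneg r q]

end PairEstimate

/-! ### Full measure -/

section AlmostEverywhere

variable {ι : Type*} [Fintype ι] {κ : ℝ} {j : ℕ} {a : ℕ → ℝ} {y : ι → ℝ} {b : ℕ → ℤ}
  {c : ℕ → ι → ℤ}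

lemma exists_sum_sum_measureReal_blockGoodSet_le (hκ : 0 < κ) (hι : 2 ≤ Fintype.card ι)
    (ha : IsAdmissible κ j a) (hbc : IsBlockModel y κ b c) :
    ∃ C : ℝ, 0 < C ∧ ∀ n, ∑ q ∈ Finset.range n, ∑ r ∈ Finset.range n,
      (volume.restrict (unitCube ι)).real (blockGoodSet a y b c q ∩ blockGoodSet a y b c r) ≤
        C * ((∑ q ∈ Finset.range n, a q ^ Fintype.card ι) ^ 2 +
          ∑ q ∈ Finset.range n, a q ^ Fintype.card ι) := by
  set d := Fintype.card ι
  obtain ⟨K, hK, hsum⟩ := exists_sum_overlapError_le hκ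
  have hw (q : ℕ) : 0 ≤ a q ^ d := pow_nonneg (ha.nonneg q) d
  have hw₀ : a 0 ^ d = 0 := by
    rw [not_ne_iff.1 fun h ↦ absurd (ha.of_ne_zero 0 h).1 (by norm_num), zero_pow (by omega)]
  refine ⟨30 ^ d * (1 + 2 * K), by positivity, fun n ↦ ?_⟩
  set σ := ∑ q ∈ Finset.range n, a q ^ d
  have hσ : 0 ≤ σ := Finset.sum_nonneg fun q _ ↦ hw q
  have errors : ∑ q ∈ Finset.range n, ∑ r ∈ Finset.range n, overlapError κ (a · ^ d) q r ≤ K * σ :=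
    (Finset.sum_le_sum fun q _ ↦ hsum _ hw hw₀ q _).trans_eq (Finset.mul_sum ..).symm
  calc ∑ q ∈ Finset.range n, ∑ r ∈ Finset.range n,
        (volume.restrict (unitCube ι)).real (blockGoodSet a y b c q ∩ blockGoodSet a y b c r)
      ≤ ∑ q ∈ Finset.range n, ∑ r ∈ Finset.range n, 30 ^ d * (a q ^ d * a r ^ d +
          (overlapError κ (a · ^ d) q r + overlapError κ (a · ^ d) r q)) :=
        Finset.sum_le_sum fun q _ ↦ Finset.sum_le_sum fun r _ ↦
          measureReal_blockGoodSet_inter_le hκ.le hι ha hbc q r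
    _ = 30 ^ d * (σ ^ 2 + 2 *
          ∑ q ∈ Finset.range n, ∑ r ∈ Finset.range n, overlapError κ (a · ^ d) q r) := by
        simp only [← Finset.mul_sum, Finset.sum_add_distrib, ← Finset.sum_mul]
        rw [Finset.sum_comm (f := fun q r ↦ overlapError κ (a · ^ d) r q), sq, two_mul]
    _ ≤ 30 ^ d * (σ ^ 2 + 2 * (K * σ)) := by gcongr
    _ ≤ 30 ^ d * ((1 + 2 * K) * (σ ^ 2 + σ)) := by
        gcongr
        nlinarith [mul_nonneg hK.le (sq_nonneg σ)]
    _ = 30 ^ d * (1 + 2 * K) * (σ ^ 2 + σ) := by ring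

lemma ae_restrict_unitCube_mem_Ioo :
    ∀ᵐ x ∂volume.restrict (unitCube ι), x ∈ Set.univ.pi fun _ : ι ↦ Set.Ioo (0 : ℝ) 1 := by
  have ae_eq : (Set.univ.pi fun _ : ι ↦ Set.Ioo (0 : ℝ) 1) =ᵐ[volume] unitCube ι :=
    Measure.univ_pi_Ioo_ae_eq_Icc.trans Measure.univ_pi_Ico_ae_eq_Icc.symm
  rw [← Measure.restrict_congr_set ae_eq]
  exact ae_restrict_mem (.univ_pi fun _ ↦ measurableSet_Ioo)

lemma ae_frequently_mem_blockGoodSet (hκ : 0 < κ) (hι : 2 ≤ Fintype.card ι)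
    (ha : IsAdmissible κ j a) (hbc : IsBlockModel y κ b c)
    (hdiv : ¬Summable fun q ↦ a q ^ Fintype.card ι) :
    ∀ᵐ x ∂volume.restrict (unitCube ι), ∃ᶠ q in atTop, x ∈ blockGoodSet a y b c q := by
  have : IsFiniteMeasure (volume.restrict (unitCube ι)) :=
    ⟨by rw [Measure.restrict_apply_univ, volume_unitCube]; exact ENNReal.one_lt_top⟩
  have hw (q : ℕ) : 0 ≤ a q ^ Fintype.card ι := pow_nonneg (ha.nonneg q) _
  obtain ⟨C, hC, hpair⟩ := exists_sum_sum_measureReal_blockGoodSet_le hκ hι ha hbc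
  have density (z : ι → ℝ) (ρ : ℝ) (hρ : 0 < ρ)
      (hball : Metric.closedBall z ρ ⊆ Set.univ.pi fun _ ↦ Set.Ioo (0 : ℝ) 1) :
      ∀ᶠ q in atTop, 1 / 8 * (volume.restrict (unitCube ι)).real (Metric.closedBall z ρ) *
        a q ^ Fintype.card ι ≤
        (volume.restrict (unitCube ι)).real (blockGoodSet a y b c q ∩ Metric.closedBall z ρ) := by
    have hcube : Metric.closedBall z ρ ⊆ unitCube ι :=
      hball.trans (Set.pi_mono fun _ _ ↦ Set.Ioo_subset_Ico_self)
    filter_upwards [eventually_measureReal_closedBall_mul_pow_le hι hρ] with q hq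
    rw [measureReal_def, Measure.restrict_eq_self _ hcube, measureReal_def,
      Measure.restrict_eq_self _ (Set.inter_subset_right.trans hcube)]
    exact hq y z (a q) _ _ (ha.nonneg q) (ha.le_half q) (hbc _).primitive
  filter_upwards [ae_restrict_unitCube_mem_Ioo, ae_frequently_mem_of_sum_sum_measureReal_inter_le
    (fun q ↦ isOpen_goodSet.measurableSet) (isOpen_set_pi Set.finite_univ fun _ _ ↦ isOpen_Ioo) hw
    ((not_summable_iff_tendsto_nat_atTop_of_nonneg hw).1 hdiv) hC hpair (by norm_num) density]
    with x hx h using h hx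

end AlmostEverywhere

/-- The part of `ψ` on the blocks of parity `j` from `q₀` on, dropping the values below `1 / q`. -/
noncomputable def blockPart (ψ : ℕ → ℝ) (q₀ j q : ℕ) : ℝ :=
  if q₀ ≤ q ∧ block q % 2 = j ∧ 1 / q ≤ ψ q then ψ q else 0

lemma blockPart_nonneg {ψ : ℕ → ℝ} (hψ : ∀ q, 0 ≤ ψ q) (q₀ j q : ℕ) : 0 ≤ blockPart ψ q₀ j q := by
  unfold blockPart; split_ifs <;> [exact hψ q; rfl]

lemma blockPart_le {ψ : ℕ → ℝ} (hψ : ∀ q, 0 ≤ ψ q) (q₀ j q : ℕ) : blockPart ψ q₀ j q ≤ ψ q := by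
  unfold blockPart; split_ifs <;> [rfl; exact hψ q]

lemma isAdmissible_blockPart {ψ : ℕ → ℝ} {κ : ℝ} {q₀ : ℕ} (hψ : ∀ q, 0 ≤ ψ q) (hq₀ : 2 ≤ q₀)
    (h : ∀ q ≥ q₀, ψ q ≤ 1 / 2 ∧ ψ q ≤ (q : ℝ) ^ (-(3 * κ))) (j : ℕ) :
    IsAdmissible κ j (blockPart ψ q₀ j) where
  nonneg q := blockPart_nonneg hψ ..
  le_half q := by unfold blockPart; split_ifs with hq <;> [exact (h q hq.1).1; norm_num]
  le_rpow q := by unfold blockPart; split_ifs with hq <;> [exact (h q hq.1).2; positivity]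
  of_ne_zero q hne := by
    obtain ⟨hq, -⟩ := ite_ne_right_iff.1 hne
    rw [blockPart, if_pos hq]
    exact ⟨hq₀.trans hq.1, hq.2⟩

lemma exists_not_summable_blockPart_pow {ψ : ℕ → ℝ} {d : ℕ} (hψ : ∀ q, 0 ≤ ψ q) (hd : 2 ≤ d)
    (hdiv : ¬Summable fun q ↦ ψ q ^ d) (q₀ : ℕ) :
    ∃ j, ¬Summable fun q ↦ blockPart ψ q₀ j q ^ d := by
  by_contra! hsum
  refine hdiv (.of_norm_bounded_eventually_nat (((hsum 0).add (hsum 1)).add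
    (Real.summable_one_div_nat_pow.2 hd)) ?_)
  filter_upwards [eventually_ge_atTop q₀] with q hq
  have part_nonneg (j : ℕ) : 0 ≤ blockPart ψ q₀ j q ^ d := pow_nonneg (blockPart_nonneg hψ ..) d
  rw [Real.norm_of_nonneg (pow_nonneg (hψ q) d)]
  obtain h | h := le_or_gt (1 / (q : ℝ)) (ψ q)
  · have part_eq : blockPart ψ q₀ (block q % 2) q = ψ q := if_pos ⟨hq, rfl, h⟩
    have : 0 ≤ 1 / (q : ℝ) ^ d := by positivity
    obtain hj | hj := Nat.mod_two_eq_zero_or_one (block q) <;> rw [hj] at part_eq <;>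
      linarith [part_nonneg 0, part_nonneg 1, congrArg (· ^ d) part_eq]
  · have := pow_le_pow_left₀ (hψ q) h.le d
    rw [one_div_pow] at this
    linarith [part_nonneg 0, part_nonneg 1]

lemma eventually_le_half_and_le_rpow {ψ : ℕ → ℝ} {δ : ℝ} (hδ : 0 < δ)
    (hO : ψ =O[atTop] fun q : ℕ ↦ (q : ℝ) ^ (-δ)) :
    ∀ᶠ q : ℕ in atTop, ψ q ≤ 1 / 2 ∧ ψ q ≤ (q : ℝ) ^ (-(δ / 2)) := by
  have tendsto_zero : Tendsto ψ atTop (nhds 0) :=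
    hO.trans_tendsto ((tendsto_rpow_neg_atTop hδ).comp tendsto_natCast_atTop_atTop)
  have little := hO.trans_isLittleO (isLittleO_natCast_rpow (show -δ < -(δ / 2) by linarith))
  filter_upwards [tendsto_zero.eventually_le_const one_half_pos, little.bound one_pos]
    with q hhalf hpow
  rw [one_mul, Real.norm_eq_abs (ψ q), Real.norm_of_nonneg (by positivity)] at hpow
  exact ⟨hhalf, (le_abs_self _).trans hpow⟩

/-- The point `x` is `(ψ, y)`-approximable: infinitely many pairs `(q, p) ∈ ℕ × ℤ^ι` satisfy
`|q x - p - y| < ψ q` in the maximum norm. -/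
def IsApproximable {ι : Type*} [Fintype ι] (ψ : ℕ → ℝ) (y x : ι → ℝ) : Prop :=
  {qp : ℕ × (ι → ℤ) | ‖(qp.1 : ℝ) • x - (fun i ↦ (qp.2 i : ℝ)) - y‖ < ψ qp.1}.Infinite

lemma isApproximable_of_frequently_mem_blockGoodSet {ι : Type*} [Fintype ι] [Nonempty ι]
    {ψ a : ℕ → ℝ} {y x : ι → ℝ} {b : ℕ → ℤ} {c : ℕ → ι → ℤ} (haψ : ∀ q, a q ≤ ψ q)
    (h : ∃ᶠ q in atTop, x ∈ blockGoodSet a y b c q) : IsApproximable ψ y x := by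
  refine Set.Infinite.of_image Prod.fst ((Nat.frequently_atTop_iff_infinite.1 h).mono ?_)
  rintro q ⟨p, hp, -⟩
  refine ⟨(q, p), (pi_norm_lt_iff ?_).2 fun i ↦ (hp i).trans_le (haψ q), rfl⟩
  exact (abs_nonneg _).trans_lt ((hp (Classical.arbitrary ι)).trans_le (haψ q))

theorem main_theorem_general {ι : Type*} [Fintype ι] (hι : 2 ≤ Fintype.card ι) {δ : ℝ}
    (hδ : 0 < δ) {ψ : ℕ → ℝ} (hψ : ∀ q, 0 ≤ ψ q)
    (hO : ψ =O[atTop] fun q : ℕ ↦ (q : ℝ) ^ (-δ)) (y : ι → ℝ)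
    (hdiv : ¬Summable fun q ↦ ψ q ^ Fintype.card ι) :
    volume {x ∈ unitCube ι | IsApproximable ψ y x} = 1 := by
  have : Nonempty ι := Fintype.card_pos_iff.1 (by omega)
  have hκ : 0 < δ / 6 := by positivity
  obtain ⟨q₀, hq₀⟩ := eventually_atTop.1
    ((eventually_le_half_and_le_rpow hδ hO).and (eventually_ge_atTop 2))
  have small : ∀ q ≥ q₀, ψ q ≤ 1 / 2 ∧ ψ q ≤ (q : ℝ) ^ (-(3 * (δ / 6))) := by
    rw [show 3 * (δ / 6) = δ / 2 by ring]
    exact fun q hq ↦ (hq₀ q hq).1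
  obtain ⟨j, hj⟩ := exists_not_summable_blockPart_pow hψ hι hdiv q₀
  obtain ⟨b, c, hbc⟩ := exists_isBlockModel y hκ.le
  have frequently := ae_frequently_mem_blockGoodSet hκ hι
    (isAdmissible_blockPart hψ (hq₀ q₀ le_rfl).2 small j) hbc hj
  have ae_eq : {x ∈ unitCube ι | IsApproximable ψ y x} =ᵐ[volume] unitCube ι := by
    filter_upwards [(ae_restrict_iff' measurableSet_unitCube).1 frequently] with x hx
    exact propext (and_iff_left_of_imp fun hmem ↦
      isApproximable_of_frequently_mem_blockGoodSet (blockPart_le hψ q₀ j) (hx hmem))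
  rw [measure_congr ae_eq, volume_unitCube]

/-- Main theorem: if `ψ(q) = O(q^{-δ})` for some `δ > 0` and `∑ ψ(q)² = ∞`, then for any
`y ∈ ℝ²` the set `𝒜_{1,2}(ψ,y)` has Lebesgue measure one. -/
theorem main_theorem (δ : ℝ) (hδ : 0 < δ) (ψ : ℕ → ℝ) (hψ : ∀ q, 0 ≤ ψ q)
    (hO : (fun q : ℕ => ψ q) =O[atTop] (fun q : ℕ => (q : ℝ) ^ (-δ)))
    (y : Fin 2 → ℝ)
    (hdiv : ¬ Summable (fun q : ℕ => ψ q ^ 2)) :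
    volume (approxSet ψ y) = 1 :=
  main_theorem_general (ι := Fin 2) (by simp) hδ hψ hO y (by simpa using hdiv)
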